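/- arXiv:0802.4186 — 5 statements merged into one kernel-verified Lean document; each statement's English description precedes it below -/
import Mathlib

section
/- Let K ⊆ L be a finite Galois extension with Galois group G of order n, and assume that every divisor d of n is the cardinality of some subgroup of G. Then for all positive integers r, s with r, s ≤ n, the minimum of dim_K⟨AB⟩, taken over all K-subspaces A, B of L with dim_K A = r and dim_K B = s, equals min over all divisors d of n of (⌈r/d⌉ + ⌈s/d⌉ − 1)·d. -/
namespace KnAux
open Module

theorem kn_finrank_map {K L : Type*} [Field K] [Field L] [Algebra K L]
    (A : Submodule K L) (x : L) (hx : x ≠ 0) :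
    finrank K (A.map (LinearMap.mulLeft K x)) = finrank K A :=
  (LinearEquiv.finrank_eq (Submodule.equivMapOfInjective _ (mul_right_injective₀ hx) A)).symm

theorem kn_aux {K L : Type*} [Field K] [Field L] [Algebra K L] [FiniteDimensional K L] (N : ℕ) :
    ∀ (A B : Submodule K L), finrank K A ≤ N → (1 : L) ∈ A →
    ∃ (H : IntermediateField K L) (V : Submodule K L), B ≤ V ∧ V ≤ A * B ∧
      (∀ h ∈ H, ∀ v ∈ V, h * v ∈ V) ∧ finrank K A + finrank K B ≤ finrank K V + finrank K H := by
  induction N with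
  | zero =>
    intro A B hA h1
    have : A = ⊥ := Submodule.finrank_eq_zero.mp (by omega)
    subst this
    simp at h1
  | succ N ih =>
    intro A B hA h1
    by_cases hAB : ∀ b ∈ B, ∀ a ∈ A, a * b ∈ B
    · refine ⟨IntermediateField.adjoin K (A : Set L), B, le_rfl, ?_, ?_, ?_⟩
      · intro b hb
        simpa using Submodule.mul_mem_mul h1 hb
      · intro h hh
        replace hh : h ∈ Algebra.adjoin K (A : Set L) := by
          rw [← IntermediateField.adjoin_toSubalgebra]
          exact hh
        induction hh using Algebra.adjoin_induction with
        | mem x hx => exact fun v hv => hAB v hv x hx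
        | algebraMap r =>
          intro v hv
          rw [← Algebra.smul_def]; exact B.smul_mem _ hv
        | add x y _ _ h1 h2 =>
          intro v hv
          rw [add_mul]
          exact add_mem (h1 v hv) (h2 v hv)
        | mul x y _ _ h1 h2 =>
          intro v hv
          rw [mul_assoc]
          exact h1 _ (h2 v hv)
      · rw [add_comm]
        gcongr
        exact Submodule.finrank_mono (t := Subalgebra.toSubmodule (IntermediateField.adjoin K (A : Set L)).toSubalgebra) (IntermediateField.subset_adjoin K (A : Set L))
    · push Not at hAB
      obtain ⟨b, hb, a, ha, hab⟩ := hAB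
      have hb0 : b ≠ 0 := by
        rintro rfl
        simp at hab
      set A' := A ⊓ B.map (LinearMap.mulLeft K b⁻¹) with hA'
      set B' := B ⊔ A.map (LinearMap.mulLeft K b) with hB'
      have hmem : ∀ x, x ∈ B.map (LinearMap.mulLeft K b⁻¹) ↔ b * x ∈ B := by
        intro x
        simp only [Submodule.mem_map, LinearMap.mulLeft_apply]
        constructor
        · rintro ⟨y, hy, rfl⟩
          rwa [mul_inv_cancel_left₀ hb0]
        · intro h
          exact ⟨_, h, inv_mul_cancel_left₀ hb0 _⟩
      have hlt : A' < A := by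
        refine lt_of_le_of_ne inf_le_left fun h => hab ?_
        have : a ∈ A' := h ▸ ha
        rw [mul_comm]
        exact (hmem a).1 this.2
      obtain ⟨H, V, h1', h2, h3, h4⟩ := ih A' B'
        (by have := Submodule.finrank_lt_finrank_of_lt hlt; omega)
        ⟨h1, (hmem 1).2 (by simpa using hb)⟩
      refine ⟨H, V, le_sup_left.trans h1', h2.trans ?_, h3, ?_⟩
      · rw [Submodule.mul_le]
        intro x hx y hy
        obtain ⟨y1, hy1, y2, hy2, rfl⟩ := Submodule.mem_sup.1 hy
        obtain ⟨z, hz, rfl⟩ := hy2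
        rw [mul_add]
        refine add_mem (Submodule.mul_mem_mul hx.1 hy1) ?_
        have := Submodule.mul_mem_mul hz ((hmem x).1 hx.2)
        convert this using 1
        simp only [LinearMap.mulLeft_apply]; ring
      · refine le_trans ?_ h4
        have e1 := Submodule.finrank_sup_add_finrank_inf_eq A (B.map (LinearMap.mulLeft K b⁻¹))
        have e2 : B' = (A ⊔ B.map (LinearMap.mulLeft K b⁻¹)).map (LinearMap.mulLeft K b) := by
          rw [Submodule.map_sup, hB', sup_comm, ← Submodule.map_comp]
          have : LinearMap.mulLeft K b ∘ₗ LinearMap.mulLeft K b⁻¹ = LinearMap.id := by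
            ext x
            simp [mul_inv_cancel_left₀ hb0]
          rw [this, Submodule.map_id]
        rw [kn_finrank_map B _ (inv_ne_zero hb0)] at e1
        rw [e2, kn_finrank_map _ _ hb0]
        rw [← hA'] at e1
        omega

theorem kn_aux2 {K L : Type*} [Field K] [Field L] [Algebra K L] [FiniteDimensional K L]
    (A B : Submodule K L) (hA : A ≠ ⊥) (a : L) (ha : a ∈ A) :
    ∃ (H : IntermediateField K L) (V : Submodule K L), (∀ b ∈ B, a * b ∈ V) ∧ V ≤ A * B ∧
      (∀ h ∈ H, ∀ v ∈ V, h * v ∈ V) ∧ finrank K A + finrank K B ≤ finrank K V + finrank K H := by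
  wlog ha0 : a ≠ 0 generalizing a
  · obtain ⟨a', ha', h0⟩ := Submodule.exists_mem_ne_zero_of_ne_bot hA
    obtain ⟨H, V, h1, h2⟩ := this a' ha' h0
    refine ⟨H, V, ?_, h2⟩
    simp [not_not.1 ha0]
  obtain ⟨H, V, h1, h2, h3, h4⟩ := kn_aux _ (A.map (LinearMap.mulLeft K a⁻¹)) B le_rfl
    ⟨a, ha, by simp [ha0]⟩
  refine ⟨H, V.map (LinearMap.mulLeft K a), fun b hb => ⟨b, h1 hb, rfl⟩, ?_, ?_, ?_⟩
  · rw [Submodule.map_le_iff_le_comap]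
    refine h2.trans ?_
    rw [Submodule.mul_le]
    rintro _ ⟨x, hx, rfl⟩ y hy
    simp only [Submodule.mem_comap, LinearMap.mulLeft_apply]
    convert Submodule.mul_mem_mul hx hy using 1
    field_simp
  · rintro h hh _ ⟨v, hv, rfl⟩
    exact ⟨h * v, h3 h hh v hv, by simp [mul_left_comm]⟩
  · rwa [kn_finrank_map _ _ ha0, ← kn_finrank_map A _ (inv_ne_zero ha0)]

theorem kn_cover {K E ι : Type*} [Field K] [AddCommGroup E] [Module K E] [FiniteDimensional K E]
    [Finite ι] (hK : Infinite K ∨ Nat.card ι < Nat.card K) (p : ι → Submodule K E)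
    (hp : ⋃ i, (p i : Set E) = Set.univ) : ∃ i, p i = ⊤ := by
  rcases hK with hK | hK
  · exact Subspace.exists_eq_top_of_iUnion_eq_univ hp
  · have : Finite K := Nat.finite_of_card_ne_zero (by omega)
    have : Finite E := Module.finite_of_finite K
    cases nonempty_fintype ι
    by_contra! hne
    have h1 : ∀ i, Nat.card (p i) * Nat.card K ≤ Nat.card E := by
      intro i
      rw [Module.natCard_eq_pow_finrank (K := K) (V := p i),
        Module.natCard_eq_pow_finrank (K := K) (V := E), ← pow_succ]
      exact Nat.pow_le_pow_right Nat.card_pos (Submodule.finrank_lt (hne i))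
    have h2 : Nat.card E ≤ ∑ i, Nat.card (p i) := by
      rw [← Nat.card_univ, ← hp]
      exact (Nat.card_mono (Set.toFinite _) le_rfl).trans (by
        exact Set.ncard_iUnion_le_of_fintype (fun i => (p i : Set E)))
    have h3 : Nat.card E * Nat.card K ≤ Nat.card ι * Nat.card E := by
      calc _ ≤ (∑ i, Nat.card (p i)) * Nat.card K := by gcongr
        _ = ∑ i, Nat.card (p i) * Nat.card K := by rw [Finset.sum_mul]
        _ ≤ ∑ i : ι, Nat.card E := Finset.sum_le_sum fun i _ => h1 i
        _ = _ := by simp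
    have : 0 < Nat.card E := Nat.card_pos
    nlinarith

theorem kn_core {K L : Type*} [Field K] [Field L] [Algebra K L] [FiniteDimensional K L]
    [Finite (IntermediateField K L)]
    (hK : Infinite K ∨ Nat.card (IntermediateField K L) < Nat.card K)
    (A B : Submodule K L) (hA : A ≠ ⊥) :
    ∃ (H : IntermediateField K L), (∀ h ∈ H, ∀ v ∈ A * B, h * v ∈ A * B) ∧
      finrank K A + finrank K B ≤ finrank K ↥(A * B) + finrank K H := by
  choose Hf Vf h1 h2 h3 h4 using fun a : A => kn_aux2 A B hA a.1 a.2
  obtain ⟨H, hH⟩ := kn_cover hK (fun H => Submodule.span K {a : A | Hf a = H}) (by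
    rw [Set.eq_univ_iff_forall]
    intro a
    exact Set.mem_iUnion.2 ⟨Hf a, Submodule.subset_span rfl⟩)
  have hne : ∃ a, Hf a = H := by
    by_contra! hne
    have : {a : A | Hf a = H} = ∅ := by ext a; simp [hne]
    rw [this, Submodule.span_empty] at hH
    have := Submodule.nontrivial_iff_ne_bot.2 hA
    exact bot_ne_top hH
  have hW : A * B = ⨆ a : {a : A // Hf a = H}, Vf a := by
    apply le_antisymm
    · rw [Submodule.mul_le]
      intro a ha b hb
      suffices h : ∀ x ∈ Submodule.span K {a : A | Hf a = H},
          (x : L) * b ∈ ⨆ a : {a : A // Hf a = H}, Vf a from h ⟨a, ha⟩ (hH ▸ Submodule.mem_top)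
      intro x hx
      induction hx using Submodule.span_induction with
      | mem x hx => exact Submodule.mem_iSup_of_mem ⟨x, hx⟩ (h1 x b hb)
      | zero => simp
      | add x y _ _ hx hy => simpa [add_mul] using add_mem hx hy
      | smul c x _ hx => simpa using Submodule.smul_mem _ c hx
    · exact iSup_le fun a => h2 a
  refine ⟨H, ?_, ?_⟩
  · intro h hh
    change A * B ≤ (A * B).comap (LinearMap.mulLeft K h)
    conv_lhs => rw [hW]
    refine iSup_le fun a v hv => h2 a ?_
    exact h3 a h (by rw [a.2]; exact hh) v hv
  · obtain ⟨a, rfl⟩ := hne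
    exact (h4 a).trans (Nat.add_le_add_right (Submodule.finrank_mono (h2 a)) _)

theorem kn_dvd {K L : Type*} [Field K] [Field L] [Algebra K L] [FiniteDimensional K L]
    (H : IntermediateField K L) (V : Submodule K L) (h : ∀ h ∈ H, ∀ v ∈ V, h * v ∈ V) :
    finrank K H ∣ finrank K V := by
  let V' : Submodule H L :=
    { V with smul_mem' := fun c x hx => h c.1 c.2 x hx }
  have h1 := finrank_mul_finrank K H V'
  exact ⟨_, h1.symm⟩

theorem kn_num {K L : Type*} [Field K] [Field L] [Algebra K L] [FiniteDimensional K L]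
    [Finite (IntermediateField K L)]
    (hK : Infinite K ∨ Nat.card (IntermediateField K L) < Nat.card K)
    (A B : Submodule K L) (hA : A ≠ ⊥) :
    ∃ d, d ∣ finrank K L ∧
      (finrank K A ⌈/⌉ d + finrank K B ⌈/⌉ d - 1) * d ≤ finrank K ↥(A * B) := by
  obtain ⟨H, hH, hmax⟩ := Set.exists_max_image
    {H : IntermediateField K L | ∀ h ∈ H, ∀ v ∈ A * B, h * v ∈ A * B} (fun H => finrank K H)
    (Set.toFinite _) (by
      obtain ⟨H, hH, -⟩ := kn_core hK A B hA
      exact ⟨H, hH⟩)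
  set T : Submodule K L := Subalgebra.toSubmodule H.toSubalgebra with hT
  have hTT : T * T = T := Subalgebra.isIdempotentElem_toSubmodule _
  have h1T : ∀ X : Submodule K L, X ≤ T * X := fun X x hx => by
    simpa using Submodule.mul_mem_mul (show (1 : L) ∈ T from H.one_mem) hx
  have hTAB : T * (A * B) = A * B :=
    le_antisymm (Submodule.mul_le.2 fun h hh v hv => hH h hh v hv) (h1T _)
  have hprod : (T * A) * (T * B) = A * B := by
    rw [mul_mul_mul_comm, hTT, hTAB]
  have hd : ∀ X : Submodule K L, finrank K H ∣ finrank K ↥(T * X) := fun X => by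
    refine kn_dvd H _ fun h hh v hv => ?_
    have := Submodule.mul_mem_mul (show h ∈ T from hh) hv
    rwa [← mul_assoc, hTT] at this
  obtain ⟨H', hH', hle⟩ := kn_core hK (T * A) (T * B)
    (fun h => hA (le_bot_iff.1 (h ▸ h1T A)))
  rw [hprod] at hH' hle
  have h2 := hmax H' hH'
  have hpos : 0 < finrank K H := finrank_pos
  refine ⟨finrank K H, ⟨_, (finrank_mul_finrank K H L).symm⟩, ?_⟩
  obtain ⟨a, ha⟩ := hd A
  obtain ⟨b, hb⟩ := hd B
  have hA1 : finrank K A ⌈/⌉ finrank K H ≤ a := by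
    rw [ceilDiv_le_iff_le_mul hpos, ← ha]
    exact Submodule.finrank_mono (h1T A)
  have hB1 : finrank K B ⌈/⌉ finrank K H ≤ b := by
    rw [ceilDiv_le_iff_le_mul hpos, ← hb]
    exact Submodule.finrank_mono (h1T B)
  calc _ ≤ (a + b - 1) * finrank K H := by gcongr
    _ = finrank K H * a + finrank K H * b - finrank K H := by
      rw [Nat.sub_mul]; ring_nf
    _ ≤ _ := by rw [← ha, ← hb]; omega

theorem kn_num_finite {K L : Type*} [Field K] [Field L] [Algebra K L] [FiniteDimensional K L]
    [Finite K] (A B : Submodule K L) (hA : A ≠ ⊥) :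
    ∃ d, d ∣ finrank K L ∧
      (finrank K A ⌈/⌉ d + finrank K B ⌈/⌉ d - 1) * d ≤ finrank K ↥(A * B) := by
  have : Finite L := Module.finite_of_finite K
  obtain ⟨m, hm, hmp⟩ := Nat.exists_infinite_primes (finrank K L + 1)
  have : NeZero m := ⟨hmp.ne_zero⟩
  obtain ⟨p, hp⟩ := CharP.exists K
  have : Fact p.Prime := ⟨CharP.char_is_prime K p⟩
  have : CharP L p := charP_of_injective_algebraMap (algebraMap K L).injective p
  let M := FiniteField.Extension L p m
  let _ : Algebra K M := ((algebraMap L M).comp (algebraMap K L)).toAlgebra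
  have : IsScalarTower K L M := IsScalarTower.of_algebraMap_eq' rfl
  have hM : finrank K M = finrank K L * m := by
    rw [← finrank_mul_finrank K L M, FiniteField.finrank_extension]
  have : FiniteDimensional K M := Module.finite_of_finrank_pos (by
    rw [hM]; exact Nat.mul_pos finrank_pos hmp.pos)
  obtain ⟨f⟩ := FiniteField.nonempty_algHom_of_finrank_dvd (F := K)
    (K := FiniteField.Extension K p m) (L := M) (by
      rw [hM, FiniteField.finrank_extension]; exact dvd_mul_left _ _)
  let K' := f.fieldRange
  have hK' : finrank K K' = m := by
    exact (LinearEquiv.finrank_eq (AlgEquiv.ofInjectiveField f).toLinearEquiv).symm.trans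
      (FiniteField.finrank_extension K p m)
  have hM' : finrank K' M = finrank K L := by
    have := finrank_mul_finrank K K' M
    rw [hK', hM, mul_comm] at this
    exact Nat.eq_of_mul_eq_mul_right hmp.pos this
  have hdisj : K'.LinearDisjoint L := by
    apply IntermediateField.LinearDisjoint.of_finrank_coprime
    rw [hK']
    exact (Nat.Prime.coprime_iff_not_dvd hmp).2 fun h => by
      have := Nat.le_of_dvd finrank_pos h
      omega
  let E : Submodule K L → Submodule K' M := fun X => Submodule.span K' (algebraMap L M '' X)
  have hE : ∀ X, finrank K' (E X) = finrank K X := by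
    intro X
    let b := Module.finBasis K X
    have hb : LinearIndependent K (fun i => (b i : L)) :=
      b.linearIndependent.map' X.subtype X.ker_subtype
    have hb' := hdisj.linearIndependent_right' hb
    have h1 : E X = Submodule.span K' (Set.range (algebraMap L M ∘ fun i => (b i : L))) := by
      apply le_antisymm
      · apply Submodule.span_le.2
        rintro _ ⟨x, hx, rfl⟩
        have h2 := congrArg (fun y : X => algebraMap L M y) (b.sum_repr ⟨x, hx⟩)
        simp only [Submodule.coe_sum, Submodule.coe_smul, map_sum] at h2
        rw [← h2]
        refine Submodule.sum_mem _ fun i _ => ?_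
        rw [Algebra.smul_def, map_mul, ← IsScalarTower.algebraMap_apply,
          IsScalarTower.algebraMap_apply K K' M, ← Algebra.smul_def]
        exact Submodule.smul_mem _ _ (Submodule.subset_span ⟨i, rfl⟩)
      · apply Submodule.span_mono
        rintro _ ⟨i, rfl⟩
        exact ⟨_, (b i).2, rfl⟩
    rw [h1, finrank_span_eq_card hb', Fintype.card_fin]
  have hmul : E A * E B = E (A * B) := by
    simp only [E]
    rw [Submodule.span_mul_span]
    apply le_antisymm
    · apply Submodule.span_mono
      rintro _ ⟨_, ⟨x, hx, rfl⟩, _, ⟨y, hy, rfl⟩, rfl⟩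
      exact ⟨x * y, Submodule.mul_mem_mul hx hy, map_mul _ _ _⟩
    · apply Submodule.span_le.2
      rintro _ ⟨x, hx, rfl⟩
      induction hx using Submodule.mul_induction_on' with
      | mem_mul_mem x hx y hy =>
        exact Submodule.subset_span ⟨_, ⟨x, hx, rfl⟩, _, ⟨y, hy, rfl⟩, (map_mul _ _ _).symm⟩
      | add x _ y _ hx hy => rw [map_add]; exact add_mem hx hy
  have hGal : IsGalois K' M := inferInstance
  have : Finite (IntermediateField K' M) :=
    Finite.of_equiv _ (IsGalois.intermediateFieldEquivSubgroup (F := K') (E := M)).toEquiv.symm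
  have hcard : Nat.card (IntermediateField K' M) < Nat.card K' := by
    calc Nat.card (IntermediateField K' M)
        = Nat.card (Subgroup (Gal(M/K')))ᵒᵈ :=
          Nat.card_congr (IsGalois.intermediateFieldEquivSubgroup (F := K') (E := M)).toEquiv
      _ ≤ Nat.card (Set Gal(M/K')) :=
          Nat.card_le_card_of_injective (fun H => ((OrderDual.ofDual H : Subgroup _) : Set _))
            (fun H₁ H₂ h => SetLike.coe_injective (A := Subgroup Gal(M/K')) h)
      _ = 2 ^ finrank K L := by
          rw [← hM', ← IsGalois.card_aut_eq_finrank, Nat.card_eq_fintype_card (α := Set _),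
            Nat.card_eq_fintype_card, Fintype.card_set]
      _ < 2 ^ m := Nat.pow_lt_pow_right (by norm_num) (by omega)
      _ ≤ Nat.card K ^ m := Nat.pow_le_pow_left Finite.one_lt_card m
      _ = Nat.card K' := by
          rw [Module.natCard_eq_pow_finrank (K := K) (V := K'), hK']
  obtain ⟨d, hd, h⟩ := kn_num (.inr hcard) (E A) (E B) (fun h0 => hA (by
    have := hE A
    rw [h0, finrank_bot] at this
    exact Submodule.finrank_eq_zero.mp this.symm))
  rw [hmul, hE, hE, hE] at h
  exact ⟨d, hM' ▸ hd, h⟩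

theorem kn_sub {K L : Type*} [Field K] [Field L] [Algebra K L] [FiniteDimensional K L]
    (V : Submodule K L) (r : ℕ) (hr : r ≤ finrank K V) : ∃ A ≤ V, finrank K A = r := by
  let b := Module.finBasis K V
  have hb : LinearIndependent K (fun i => (b i : L)) :=
    b.linearIndependent.map' V.subtype V.ker_subtype
  have hb2 := hb.comp (Fin.castLE hr) (Fin.castLE_injective hr)
  refine ⟨Submodule.span K (Set.range ((fun i => (b i : L)) ∘ Fin.castLE hr)), ?_, ?_⟩
  · rw [Submodule.span_le]
    rintro _ ⟨i, rfl⟩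
    exact (b _).2
  · rw [finrank_span_eq_card hb2, Fintype.card_fin]

theorem kn_upper {K L : Type*} [Field K] [Field L] [Algebra K L] [FiniteDimensional K L]
    [IsGalois K L] (H : IntermediateField K L) (r s : ℕ) (hr : 0 < r) (hs : 0 < s)
    (hrn : r ≤ finrank K L) (hsn : s ≤ finrank K L) :
    ∃ A B : Submodule K L, finrank K A = r ∧ finrank K B = s ∧
      finrank K ↥(A * B) ≤ (r ⌈/⌉ finrank K H + s ⌈/⌉ finrank K H - 1) * finrank K H := by
  obtain ⟨x, hx⟩ := Field.exists_primitive_element H L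
  have hn := finrank_mul_finrank K H L
  have hpos : 0 < finrank K H := finrank_pos
  have hdeg : (minpoly H x).natDegree = finrank H L := by
    rw [← IntermediateField.adjoin.finrank (IsIntegral.of_finite H x), hx,
      IntermediateField.finrank_top']
  have hli := linearIndependent_pow (K := H) x
  let P : ℕ → Submodule H L := fun a => Submodule.span H (Set.range fun i : Fin a => x ^ (i : ℕ))
  have hP : ∀ a, finrank H (P a) ≤ a := fun a => by
    simpa [Set.finrank] using finrank_range_le_card (R := H) (fun i : Fin a => x ^ (i : ℕ))
  have hP' : ∀ a ≤ finrank H L, finrank H (P a) = a := fun a ha => by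
    rw [← hdeg] at ha
    have := hli.comp (Fin.castLE ha) (Fin.castLE_injective ha)
    have := finrank_span_eq_card this
    simpa [P, Function.comp_def] using this
  have hK : ∀ X : Submodule H L, finrank K (X.restrictScalars K) = finrank K H * finrank H X :=
    fun X => (finrank_mul_finrank K H X).symm
  have key : ∀ t, t ≤ finrank K L → ∃ A ≤ (P (t ⌈/⌉ finrank K H)).restrictScalars K,
      finrank K A = t := by
    intro t ht
    apply kn_sub
    rw [hK, hP' _ (by rw [ceilDiv_le_iff_le_mul hpos, hn]; exact ht)]
    exact le_smul_ceilDiv hpos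
  obtain ⟨A, hA, hAr⟩ := key r hrn
  obtain ⟨B, hB, hBs⟩ := key s hsn
  refine ⟨A, B, hAr, hBs, ?_⟩
  have hc : ∀ t, 0 < t → 0 < t ⌈/⌉ finrank K H := by
    intro t ht
    by_contra h0
    have := (ceilDiv_le_iff_le_mul (b := t) (c := 0) hpos).1 (by omega)
    omega
  have hle : A * B ≤ (P (r ⌈/⌉ finrank K H + s ⌈/⌉ finrank K H - 1)).restrictScalars K := by
    rw [Submodule.mul_le]
    intro a ha b hb
    have h1 := Submodule.mul_mem_mul (show a ∈ P _ from hA ha) (show b ∈ P _ from hB hb)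
    rw [Submodule.span_mul_span] at h1
    refine Submodule.span_mono ?_ h1
    rintro _ ⟨_, ⟨i, rfl⟩, _, ⟨j, rfl⟩, rfl⟩
    refine ⟨⟨i + j, ?_⟩, pow_add _ _ _⟩
    have := i.2
    have := j.2
    omega
  calc _ ≤ _ := Submodule.finrank_mono hle
    _ = _ := hK _
    _ ≤ _ := by rw [mul_comm]; exact Nat.mul_le_mul_right _ (hP _)

end KnAux

open KnAux

/-- Corollary 6.1: let `K ⊆ L` be a finite Galois extension with Galois group `G` of
order `n`, such that every divisor `d` of `n` is the cardinality of a subgroup of `G`.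
Then for positive `r, s ≤ n`, the minimum of `dim_K ⟨AB⟩` over `K`-subspaces `A, B` of
`L` with `dim_K A = r`, `dim_K B = s` equals `min_{d ∣ n} (⌈r/d⌉ + ⌈s/d⌉ - 1)·d`. -/
theorem stmt_12 (K L : Type*) [Field K] [Field L] [Algebra K L]
    [FiniteDimensional K L] [IsGalois K L]
    (n : ℕ) (hn : Module.finrank K L = n)
    (hdiv : ∀ d : ℕ, d ∣ n → ∃ H : Subgroup (L ≃ₐ[K] L), Nat.card H = d)
    (r s : ℕ) (hr : 0 < r) (hs : 0 < s) (hrn : r ≤ n) (hsn : s ≤ n) :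
    sInf {m : ℕ | ∃ A B : Submodule K L,
        Module.finrank K A = r ∧ Module.finrank K B = s ∧ Module.finrank K ↥(A * B) = m}
      = sInf {m : ℕ | ∃ d : ℕ, d ∣ n ∧ m = (r ⌈/⌉ d + s ⌈/⌉ d - 1) * d} := by
  subst hn
  have lower : ∀ A B : Submodule K L, Module.finrank K A = r → Module.finrank K B = s →
      ∃ d, d ∣ Module.finrank K L ∧
        (r ⌈/⌉ d + s ⌈/⌉ d - 1) * d ≤ Module.finrank K ↥(A * B) := by
    intro A B hA hB
    have hA0 : A ≠ ⊥ := by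
      rintro rfl
      rw [finrank_bot] at hA
      omega
    rw [← hA, ← hB]
    rcases finite_or_infinite K with hK | hK
    · exact kn_num_finite A B hA0
    · have : Finite (IntermediateField K L) :=
        Finite.of_equiv _ (IsGalois.intermediateFieldEquivSubgroup (F := K) (E := L)).toEquiv.symm
      exact kn_num (.inl hK) A B hA0
  have upper : ∀ d, d ∣ Module.finrank K L → ∃ A B : Submodule K L,
      Module.finrank K A = r ∧ Module.finrank K B = s ∧
      Module.finrank K ↥(A * B) ≤ (r ⌈/⌉ d + s ⌈/⌉ d - 1) * d := by
    intro d hd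
    obtain ⟨e, he⟩ := hd
    obtain ⟨G, hG⟩ := hdiv e ⟨d, by rw [he, mul_comm]⟩
    have h1 : Module.finrank (IntermediateField.fixedField G) L = e := by
      rw [IntermediateField.finrank_fixedField_eq_card, hG]
    have h2 := Module.finrank_mul_finrank K (IntermediateField.fixedField G) L
    have he0 : 0 < e := by
      rw [← h1]; exact Module.finrank_pos
    rw [h1, he] at h2
    have h3 := Nat.eq_of_mul_eq_mul_right he0 h2
    have := kn_upper (IntermediateField.fixedField G) r s hr hs hrn hsn
    rwa [h3] at this
  apply le_antisymm
  · refine le_csInf ⟨_, ⟨1, one_dvd _, rfl⟩⟩ ?_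
    rintro _ ⟨d, hd, rfl⟩
    obtain ⟨A, B, hA, hB, h⟩ := upper d hd
    refine le_trans (Nat.sInf_le ?_) h
    exact ⟨A, B, hA, hB, rfl⟩
  · apply le_csInf
    · obtain ⟨A, B, hA, hB, -⟩ := upper 1 (one_dvd _)
      exact ⟨_, A, B, hA, hB, rfl⟩
    · rintro _ ⟨A, B, hA, hB, rfl⟩
      obtain ⟨d, hd, h⟩ := lower A B hA hB
      refine le_trans (Nat.sInf_le ?_) h
      exact ⟨d, hd, rfl⟩
end

section
/- Let K ⊆ L be a finite Galois extension with abelian Galois group G of order n. Then for all positive integers r, s with r, s ≤ n, the minimum of dim_K⟨AB⟩ over all K-subspaces A, B of L with dim_K A = r and dim_K B = s equals the minimum of |A'B'| over all subsets A', B' ⊆ G with |A'| = r and |B'| = s. -/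
open scoped Pointwise Classical

section core
set_option linter.unusedSectionVars false
variable {K L : Type*} [Field K] [Field L] [Algebra K L] [FiniteDimensional K L]

def stabF (V : Submodule K L) : IntermediateField K L :=
  Subalgebra.toIntermediateField
    { carrier := {x | ∀ v ∈ V, x * v ∈ V}
      mul_mem' := by
        intro a b ha hb v hv
        rw [mul_assoc]; exact ha _ (hb _ hv)
      add_mem' := by
        intro a b ha hb v hv
        rw [add_mul]; exact V.add_mem (ha _ hv) (hb _ hv)
      algebraMap_mem' := by
        intro k v hv
        rw [← Algebra.smul_def]; exact V.smul_mem _ hv }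
    (fun x hx => Subalgebra.inv_mem_of_algebraic _ (x := ⟨x, hx⟩)
      (Algebra.IsAlgebraic.isAlgebraic _))

theorem mem_stabF {V : Submodule K L} {x : L} : x ∈ stabF V ↔ ∀ v ∈ V, x * v ∈ V := Iff.rfl

theorem map_mul_finrank (V : Submodule K L) {e : L} (he : e ≠ 0) :
    Module.finrank K (V.map (LinearMap.mulLeft K e)) = Module.finrank K V :=
  (Submodule.equivMapOfInjective (LinearMap.mulLeft K e)
    (by intro x y h; simpa [he] using h) V).finrank_eq.symm

theorem lem1 (N : ℕ) : ∀ (A B : Submodule K L), Module.finrank K A ≤ N → B ≠ ⊥ → (1:L) ∈ A →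
    ∃ V : Submodule K L, B ≤ V ∧ V ≤ A * B ∧
      Module.finrank K A + Module.finrank K B ≤ Module.finrank K V + Module.finrank K (stabF V) := by
  induction N using Nat.strong_induction_on with
  | _ N ih =>
  intro A B hA hB h1
  by_cases hall : ∀ e ∈ B, ∀ a ∈ A, e * a ∈ B
  · refine ⟨B, le_rfl, ?_, ?_⟩
    · intro b hb
      simpa using Submodule.mul_mem_mul h1 hb
    · rw [add_comm]
      gcongr
      refine Submodule.finrank_mono (s := A) (t := (stabF B).toSubalgebra.toSubmodule) ?_
      intro a ha v hv
      rw [mul_comm]; exact hall v hv a ha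
  · push Not at hall
    obtain ⟨e, heB, a, haA, hea⟩ := hall
    have he : e ≠ 0 := by rintro rfl; simp at hea
    set A' := A ⊓ B.comap (LinearMap.mulLeft K e) with hA'
    set B' := A.map (LinearMap.mulLeft K e) ⊔ B with hB'
    have hlt : A' < A := by
      refine lt_of_le_of_ne inf_le_left ?_
      intro h
      have : a ∈ A' := h ▸ haA
      exact hea (by simpa using this.2)
    have h1' : (1:L) ∈ A' := ⟨h1, by simpa using heB⟩
    have hBB : B ≤ B' := le_sup_right
    have hmap : A'.map (LinearMap.mulLeft K e) = A.map (LinearMap.mulLeft K e) ⊓ B := by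
      ext x
      simp only [hA', Submodule.mem_map, Submodule.mem_inf, Submodule.mem_comap, LinearMap.mulLeft_apply]
      constructor
      · rintro ⟨y, ⟨h, h'⟩, rfl⟩; exact ⟨⟨y, h, rfl⟩, h'⟩
      · rintro ⟨⟨y, h, rfl⟩, h'⟩; exact ⟨y, ⟨h, h'⟩, rfl⟩
    have hdim : Module.finrank K A' + Module.finrank K B' = Module.finrank K A + Module.finrank K B := by
      have := Submodule.finrank_sup_add_finrank_inf_eq (A.map (LinearMap.mulLeft K e)) B
      rw [← hmap, map_mul_finrank _ he, map_mul_finrank _ he] at this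
      rw [hB']
      omega
    have hrk := Submodule.finrank_lt_finrank_of_lt hlt
    obtain ⟨V, hV1, hV2, hV3⟩ := ih (Module.finrank K A') (by omega) A' B' le_rfl
      (fun h => hB (le_bot_iff.1 (h ▸ hBB))) h1'
    refine ⟨V, hBB.trans hV1, hV2.trans ?_, by omega⟩
    rw [Submodule.mul_le]
    rintro x ⟨hx, hx'⟩ y hy
    obtain ⟨z, hz, b, hb, rfl⟩ := Submodule.mem_sup.1 hy
    obtain ⟨w, hw, rfl⟩ := hz
    rw [mul_add]
    refine Submodule.add_mem _ ?_ (Submodule.mul_mem_mul hx hb)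
    have hx'' : e * x ∈ B := hx'
    have := Submodule.mul_mem_mul hw hx''
    simp only [LinearMap.mulLeft_apply] at this ⊢
    convert this using 1; ring

theorem lem2 (A B : Submodule K L) (hB : B ≠ ⊥) (a : L) (ha : a ∈ A) (ha0 : a ≠ 0) :
    ∃ V : Submodule K L, (∀ b ∈ B, a * b ∈ V) ∧ V ≤ A * B ∧
      Module.finrank K A + Module.finrank K B ≤ Module.finrank K V + Module.finrank K (stabF V) := by
  obtain ⟨V, h1, h2, h3⟩ := lem1 _ (A.map (LinearMap.mulLeft K a⁻¹)) B le_rfl hB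
    ⟨a, ha, by simp [ha0]⟩
  refine ⟨V.map (LinearMap.mulLeft K a), ?_, ?_, ?_⟩
  · intro b hb
    exact ⟨b, h1 hb, rfl⟩
  · rintro _ ⟨v, hv, rfl⟩
    have key : ∀ v ∈ A.map (LinearMap.mulLeft K a⁻¹) * B, a * v ∈ A * B := by
      intro v hv
      induction hv using Submodule.mul_induction_on' with
      | mem_mul_mem m hm n hn =>
        obtain ⟨w, hw, rfl⟩ := hm
        simp only [LinearMap.mulLeft_apply]
        rw [← mul_assoc, ← mul_assoc, mul_inv_cancel₀ ha0, one_mul]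
        exact Submodule.mul_mem_mul hw hn
      | add x _ y _ hx hy => rw [mul_add]; exact Submodule.add_mem _ hx hy
    exact key v (h2 hv)
  · rw [map_mul_finrank _ (inv_ne_zero ha0)] at h3
    rw [map_mul_finrank _ ha0]
    have : stabF (V.map (LinearMap.mulLeft K a)) = stabF V := by
      ext x
      simp only [mem_stabF]
      constructor
      · intro h v hv
        obtain ⟨w, hw, hw'⟩ := h _ ⟨v, hv, rfl⟩
        simp only [LinearMap.mulLeft_apply] at hw'
        have : w = x * v := by
          apply mul_left_cancel₀ ha0; rw [hw']; ring
        exact this ▸ hw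
      · rintro h _ ⟨v, hv, rfl⟩
        exact ⟨x * v, h v hv, by simp only [LinearMap.mulLeft_apply]; ring⟩
    rw [this]; exact h3

theorem core1 [Infinite K] [Algebra.IsSeparable K L] (A B : Submodule K L) (hA : A ≠ ⊥) (hB : B ≠ ⊥) :
    Module.finrank K A + Module.finrank K B
      ≤ Module.finrank K ↥(A * B) + Module.finrank K (stabF (A * B)) := by
  have hfin : Finite (IntermediateField K L) :=
    Field.finite_intermediateField_of_exists_primitive_element K L (Field.exists_primitive_element K L)
  have hex : ∀ a : L, ∃ V : Submodule K L, a ∈ A → a ≠ 0 → ((∀ b ∈ B, a * b ∈ V) ∧ V ≤ A * B ∧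
      Module.finrank K A + Module.finrank K B ≤ Module.finrank K V + Module.finrank K (stabF V)) := by
    intro a
    by_cases h : a ∈ A ∧ a ≠ 0
    · obtain ⟨V, hV⟩ := lem2 A B hB a h.1 h.2
      exact ⟨V, fun _ _ => hV⟩
    · exact ⟨⊥, fun h1 h2 => (h ⟨h1, h2⟩).elim⟩
  choose V hV using hex
  let S : IntermediateField K L → Set A := fun H => {a | (a:L) ≠ 0 ∧ stabF (V a) = H}
  obtain ⟨H, hH⟩ : ∃ H, Submodule.span K (S H) = ⊤ := by
    apply Subspace.exists_eq_top_of_iUnion_eq_univ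
    rw [Set.eq_univ_iff_forall]
    intro a
    rw [Set.mem_iUnion]
    by_cases h : (a:L) = 0
    · have : a = 0 := Subtype.ext h
      exact ⟨⊥, by rw [this]; exact Submodule.zero_mem _⟩
    · exact ⟨stabF (V a), Submodule.subset_span ⟨h, rfl⟩⟩
  have hHs : H ≤ stabF (A * B) := by
    intro x hx
    rw [mem_stabF]
    have key : ∀ a : A, a ∈ Submodule.span K (S H) → ∀ b ∈ B, x * (a * b) ∈ A * B := by
      intro a ha
      induction ha using Submodule.span_induction with
      | mem a ha =>
        intro b hb
        obtain ⟨h0, hs⟩ := ha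
        obtain ⟨h1, h2, h3⟩ := hV a a.2 h0
        rw [← hs] at hx
        exact h2 (hx _ (h1 b hb))
      | zero => intro b hb; simp
      | add a a' _ _ h h' =>
        intro b hb
        have := Submodule.add_mem _ (h b hb) (h' b hb)
        convert this using 1; push_cast; ring
      | smul k a _ h =>
        intro b hb
        have := Submodule.smul_mem _ k (h b hb)
        convert this using 1; simp
    intro v hv
    induction hv using Submodule.mul_induction_on' with
    | mem_mul_mem m hm n hn => exact key ⟨m, hm⟩ (hH ▸ Submodule.mem_top) n hn
    | add p _ q _ hx hy => rw [mul_add]; exact Submodule.add_mem _ hx hy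
  have hne : (S H).Nonempty := by
    by_contra h
    rw [Set.not_nonempty_iff_eq_empty] at h
    rw [h, Submodule.span_empty] at hH
    have : Subsingleton A := (Submodule.subsingleton_iff K).1 (subsingleton_of_bot_eq_top hH)
    exact hA ((Submodule.subsingleton_iff_eq_bot).1 this)
  obtain ⟨a, h0, hs⟩ := hne
  obtain ⟨h1, h2, h3⟩ := hV a a.2 h0
  rw [hs] at h3
  refine h3.trans (add_le_add (Submodule.finrank_mono h2) ?_)
  exact Submodule.finrank_mono (s := H.toSubalgebra.toSubmodule)
    (t := (stabF (A * B)).toSubalgebra.toSubmodule) hHs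

def QQ (n r s m : ℕ) : Prop :=
  ∃ d a b : ℕ, 0 < d ∧ d ∣ n ∧ r ≤ d * a ∧ s ≤ d * b ∧ d * (a + b) ≤ m + d

theorem fin_dvd (T : IntermediateField K L) (A : Submodule K L) (h : T ≤ stabF A) :
    Module.finrank K T ∣ Module.finrank K A := by
  let A' : Submodule T L :=
    { carrier := A
      add_mem' := fun h h' => A.add_mem h h'
      zero_mem' := A.zero_mem
      smul_mem' := fun t v hv => h t.2 v hv }
  have h1 := Module.finrank_mul_finrank K T A'
  exact ⟨_, h1.symm⟩

theorem core2 [Infinite K] [Algebra.IsSeparable K L] (A B : Submodule K L) (hA : A ≠ ⊥) (hB : B ≠ ⊥) :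
    QQ (Module.finrank K L) (Module.finrank K A) (Module.finrank K B) (Module.finrank K ↥(A * B)) := by
  set T := stabF (A * B) with hT
  let TT := T.toSubalgebra.toSubmodule
  have hTT : TT * TT = TT := by
    apply le_antisymm
    · rw [Submodule.mul_le]
      exact fun x hx y hy => T.mul_mem hx hy
    · intro v hv
      simpa using Submodule.mul_mem_mul (show (1:L) ∈ TT from T.one_mem) hv
  have hTAB : TT * (A * B) = A * B := by
    apply le_antisymm
    · rw [Submodule.mul_le]
      intro x hx v hv
      exact hx v hv
    · intro v hv
      simpa using Submodule.mul_mem_mul (show (1:L) ∈ TT from T.one_mem) hv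
  have hle : ∀ A : Submodule K L, A ≤ TT * A := by
    intro A v hv
    simpa using Submodule.mul_mem_mul (show (1:L) ∈ TT from T.one_mem) hv
  have hprod : (TT * A) * (TT * B) = A * B := by
    rw [mul_mul_mul_comm, hTT, hTAB]
  have hst : ∀ A : Submodule K L, T ≤ stabF (TT * A) := by
    intro A x hx v hv
    have := Submodule.mul_mem_mul (show x ∈ TT from hx) hv
    rwa [← mul_assoc, hTT] at this
  have hc := core1 (TT * A) (TT * B) (fun h => hA (le_bot_iff.1 (h ▸ hle A)))
    (fun h => hB (le_bot_iff.1 (h ▸ hle B)))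
  rw [hprod, ← hT] at hc
  obtain ⟨a, ha⟩ := fin_dvd T _ (hst A)
  obtain ⟨b, hb⟩ := fin_dvd T _ (hst B)
  refine ⟨Module.finrank K T, a, b, Module.finrank_pos, ?_, ?_, ?_, ?_⟩
  · exact ⟨_, (Module.finrank_mul_finrank K T L).symm⟩
  · rw [← ha]; exact Submodule.finrank_mono (hle A)
  · rw [← hb]; exact Submodule.finrank_mono (hle B)
  · rw [mul_add, ← ha, ← hb]; exact hc
end core

theorem QQ.mono {n r s m m' : ℕ} (h : QQ n r s m) (hm : m ≤ m') : QQ n r s m' := by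
  obtain ⟨d, a, b, h1, h2, h3, h4, h5⟩ := h
  exact ⟨d, a, b, h1, h2, h3, h4, by omega⟩

theorem fixed_infinite (G M : Type*) [Group G] [Finite G] [Field M] [MulSemiringAction G M]
    [Infinite M] : Infinite (FixedPoints.subfield G M) := by
  by_contra h
  rw [not_infinite_iff_finite] at h
  have : Finite M := Module.finite_of_finite (FixedPoints.subfield G M)
  exact not_finite M

theorem kummer1 {G M : Type*} [CommGroup G] [Finite G] [Field M] [MulSemiringAction G M]
    [FaithfulSMul G M] [Algebra ℂ M] [SMulCommClass G ℂ M]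
    (A B C : Finset (G →* ℂˣ)) (hA : A.Nonempty) (hB : B.Nonempty)
    (hAB : ∀ ψ ∈ A, ∀ φ ∈ B, ψ * φ ∈ C) : QQ (Nat.card G) A.card B.card C.card := by
  have := Fintype.ofFinite G
  have : CharZero M := charZero_of_injective_algebraMap (algebraMap ℂ M).injective
  have : Infinite (FixedPoints.subfield G M) := fixed_infinite G M
  have hC : ∀ (g : G) (z : ℂ), g • (algebraMap ℂ M z) = algebraMap ℂ M z := by
    intro g z
    rw [Algebra.algebraMap_eq_smul_one, smul_comm, smul_one]
  -- eigenvectors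
  have hex : ∀ ψ : G →* ℂˣ, ∃ x : M, x ≠ 0 ∧ ∀ g : G, g • x = algebraMap ℂ M (ψ g) * x := by
    intro ψ
    have hli := (linearIndependent_monoidHom M M).comp
      (fun g : G => (MulSemiringAction.toRingHom G M g : M →* M))
      (by
        intro g h hgh
        apply eq_of_smul_eq_smul (α := M)
        intro a
        exact DFunLike.congr_fun hgh a)
    rw [Fintype.linearIndependent_iff] at hli
    by_contra hcon
    push Not at hcon
    have h0 : ∀ y : M, ∑ g : G, algebraMap ℂ M ((ψ g⁻¹ : ℂˣ) : ℂ) * (g • y) = 0 := by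
      intro y
      by_contra hne
      obtain ⟨γ, hγ⟩ := hcon _ hne
      apply hγ
      rw [Finset.smul_sum, Finset.mul_sum]
      refine Fintype.sum_equiv (Equiv.mulLeft γ) _ _ ?_
      intro g
      have h1 : ψ g⁻¹ = ψ γ * ψ (γ * g)⁻¹ := by rw [← map_mul]; congr 1; rw [mul_inv, mul_inv_cancel_left]
      simp only [Equiv.coe_mulLeft]
      rw [smul_mul', hC, smul_smul, ← mul_assoc, ← map_mul, ← Units.val_mul, ← h1]
    have := hli (fun g => algebraMap ℂ M ((ψ g⁻¹ : ℂˣ) : ℂ)) (by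
      funext y
      simpa using h0 y) 1
    simp at this
  choose x hx0 hx using hex
  have hli : LinearIndependent (FixedPoints.subfield G M) x := by
    rw [linearIndependent_iff']
    intro s c hc ψ hψ
    have hdl := (linearIndependent_monoidHom G M).comp
      (fun ψ : G →* ℂˣ => ((algebraMap ℂ M : ℂ →* M).comp ((Units.coeHom ℂ).comp ψ)))
      (by
        intro ψ φ h
        ext g
        have := DFunLike.congr_fun h g
        exact (algebraMap ℂ M).injective this)
    rw [linearIndependent_iff'] at hdl
    have := hdl s (fun ψ => (c ψ : M) * x ψ) (by
      funext g
      have h2 := congrArg (fun y => g • y) hc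
      simp only [Finset.smul_sum, smul_zero] at h2
      rw [Pi.zero_apply, ← h2]
      rw [Finset.sum_apply]
      refine Finset.sum_congr rfl fun ψ _ => ?_
      simp only [Function.comp, Pi.smul_apply, smul_eq_mul, MonoidHom.comp_apply]
      rw [smul_comm, hx]
      change _ = (c ψ : M) * _
      simp only [Units.coeHom_apply, MonoidHom.coe_coe]
      ring) ψ hψ
    have := (mul_eq_zero.1 this).resolve_right (hx0 ψ)
    exact Subtype.ext this
  let E : Finset (G →* ℂˣ) → Submodule (FixedPoints.subfield G M) M :=
    fun S => Submodule.span _ (x '' S)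
  have hE : ∀ S, Module.finrank (FixedPoints.subfield G M) (E S) = S.card := by
    intro S
    have h1 := finrank_span_eq_card (R := FixedPoints.subfield G M)
      (b := fun i : S => x i) (hli.comp _ Subtype.val_injective)
    have h2 : Set.range (fun i : S => x i) = x '' S := by
      ext y; simp
    rw [h2] at h1
    simpa using h1
  have hne : ∀ S : Finset (G →* ℂˣ), S.Nonempty → E S ≠ ⊥ := by
    intro S hS h
    have := hE S
    rw [h, finrank_bot] at this
    have := hS.card_pos
    omega
  have hmul : E A * E B ≤ E C := by
    rw [Submodule.span_mul_span, Submodule.span_le]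
    rintro _ ⟨_, ⟨ψ, hψ, rfl⟩, _, ⟨φ, hφ, rfl⟩, rfl⟩
    have hfix : x ψ * x φ / x (ψ * φ) ∈ FixedPoints.subfield G M := by
      intro g
      have h1 : algebraMap ℂ M (ψ g) ≠ 0 := by simp
      have h2 : algebraMap ℂ M (φ g) ≠ 0 := by simp
      have h3 := hx0 (ψ * φ)
      rw [smul_div₀', smul_mul', hx, hx, hx]
      simp only [MonoidHom.mul_apply, Units.val_mul, map_mul]
      field_simp
    have : x ψ * x φ = (⟨_, hfix⟩ : FixedPoints.subfield G M) • x (ψ * φ) := by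
      change _ = x ψ * x φ / x (ψ * φ) * _
      rw [div_mul_cancel₀ _ (hx0 _)]
    change x ψ * x φ ∈ _
    rw [this]
    apply Submodule.smul_mem
    apply Submodule.subset_span
    exact ⟨_, hAB ψ hψ φ hφ, rfl⟩
  have := core2 (E A) (E B) (hne A hA) (hne B hB)
  rw [hE, hE, FixedPoints.finrank_eq_card, ← Nat.card_eq_fintype_card] at this
  refine this.mono ?_
  rw [← hE]
  exact Submodule.finrank_mono hmul

@[reducible]
noncomputable def mvAct (G : Type) [Group G] : MulSemiringAction G (MvPolynomial G ℂ) where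
  smul g p := MvPolynomial.rename (fun h => g * h) p
  one_smul p := by
    change MvPolynomial.rename (fun h => 1 * h) p = p
    simp only [one_mul]; exact MvPolynomial.rename_id_apply p
  mul_smul g h p := by
    change MvPolynomial.rename _ p = MvPolynomial.rename _ (MvPolynomial.rename _ p)
    rw [MvPolynomial.rename_rename]
    congr 2
    funext x; simp [mul_assoc]
  smul_zero g := map_zero (MvPolynomial.rename _)
  smul_add g := map_add (MvPolynomial.rename _)
  smul_one g := map_one (MvPolynomial.rename _)
  smul_mul g := map_mul (MvPolynomial.rename _)

theorem mvAct_smul (G : Type) [Group G] (g : G) (p : MvPolynomial G ℂ) :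
    letI := mvAct G
    g • p = MvPolynomial.rename (fun h => g * h) p := rfl

theorem kummer2 {G : Type} [CommGroup G] [Finite G]
    (A B C : Finset (G →* ℂˣ)) (hA : A.Nonempty) (hB : B.Nonempty)
    (hAB : ∀ ψ ∈ A, ∀ φ ∈ B, ψ * φ ∈ C) : QQ (Nat.card G) A.card B.card C.card := by
  let := mvAct G
  let : MulSemiringAction G (FractionRing (MvPolynomial G ℂ)) :=
    IsFractionRing.mulSemiringAction G (MvPolynomial G ℂ) (FractionRing (MvPolynomial G ℂ))
  have hf : FaithfulSMul G (MvPolynomial G ℂ) := by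
    constructor
    intro g h hgh
    have := hgh (MvPolynomial.X (1 : G))
    rw [mvAct_smul, mvAct_smul, MvPolynomial.rename_X, MvPolynomial.rename_X] at this
    simpa using MvPolynomial.X_injective this
  have : FaithfulSMul G (FractionRing (MvPolynomial G ℂ)) :=
    IsFractionRing.faithfulSMul G (MvPolynomial G ℂ) _
  have : SMulCommClass G ℂ (FractionRing (MvPolynomial G ℂ)) := by
    constructor
    intro g z y
    rw [Algebra.smul_def, Algebra.smul_def, smul_mul']
    congr 1
    rw [IsScalarTower.algebraMap_apply ℂ (MvPolynomial G ℂ), ← algebraMap.coe_smul']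
    congr 1
    rw [MvPolynomial.algebraMap_eq, mvAct_smul, MvPolynomial.rename_C]
  exact kummer1 (M := FractionRing (MvPolynomial G ℂ)) A B C hA hB hAB

theorem lowerGroup {G : Type*} [CommGroup G] [Finite G]
    (A B : Finset G) (hA : A.Nonempty) (hB : B.Nonempty) :
    QQ (Nat.card G) A.card B.card (A * B).card := by
  -- transport to Type
  have hs : Small.{0} G := inferInstance
  let e0 : Shrink.{0} G ≃* G := Shrink.mulEquiv
  have : Finite (Shrink.{0} G) := Finite.of_equiv _ e0.symm.toEquiv
  have : NeZero ((Monoid.exponent (Shrink.{0} G) : ℕ) : ℂ) :=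
    ⟨by exact_mod_cast Monoid.exponent_ne_zero_of_finite⟩
  obtain ⟨e1⟩ := CommGroup.monoidHom_mulEquiv_of_hasEnoughRootsOfUnity (Shrink.{0} G) ℂ
  let e : G ≃* (Shrink.{0} G →* ℂˣ) := (e1.trans e0).symm
  have := kummer2 (A.image e) (B.image e) ((A * B).image e) (hA.image _) (hB.image _) (by
    intro ψ hψ φ hφ
    obtain ⟨a, ha, rfl⟩ := Finset.mem_image.1 hψ
    obtain ⟨b, hb, rfl⟩ := Finset.mem_image.1 hφ
    rw [← map_mul]
    exact Finset.mem_image_of_mem _ (Finset.mul_mem_mul ha hb))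
  rw [Finset.card_image_of_injective _ e.injective,
    Finset.card_image_of_injective _ e.injective,
    Finset.card_image_of_injective _ e.injective, Nat.card_congr e0.toEquiv] at this
  exact this

theorem lowerField1 {K L M : Type*} [Field K] [Field L] [Algebra K L] [FiniteDimensional K L]
    [IsGalois K L] [Field M] [Infinite M] [Algebra L M] [MulSemiringAction (L ≃ₐ[K] L) M]
    (hact : ∀ (σ : L ≃ₐ[K] L) (x : L), σ • (algebraMap L M x) = algebraMap L M (σ x))
    (A B : Submodule K L) (hA : A ≠ ⊥) (hB : B ≠ ⊥) :
    QQ (Module.finrank K L) (Module.finrank K A) (Module.finrank K B) (Module.finrank K ↥(A * B)) := by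
  have : FaithfulSMul (L ≃ₐ[K] L) M := by
    constructor
    intro σ τ h
    ext x
    have := h (algebraMap L M x)
    rw [hact, hact] at this
    exact (algebraMap L M).injective this
  have : Infinite (FixedPoints.subfield (L ≃ₐ[K] L) M) := fixed_infinite _ M
  let F := FixedPoints.subfield (L ≃ₐ[K] L) M
  have hK : ∀ k : K, algebraMap L M (algebraMap K L k) ∈ F := by
    intro k σ
    rw [hact, AlgEquiv.commutes]
  have hli : ∀ {m : ℕ} (v : Fin m → L), LinearIndependent K v →
      LinearIndependent F (fun i => algebraMap L M (v i)) := by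
    intro m v hv
    rw [Fintype.linearIndependent_iff]
    intro c hc j
    -- dual element
    obtain ⟨f, hf⟩ : ∃ f : L →ₗ[K] K, ∀ i, f (v i) = if i = j then 1 else 0 := by
      let b := Module.Basis.span hv
      obtain ⟨f, hf⟩ := LinearMap.exists_extend (b.coord j)
      refine ⟨f, fun i => ?_⟩
      have := LinearMap.congr_fun hf (b i)
      simp only [LinearMap.comp_apply, Submodule.subtype_apply] at this
      rw [show ((b i : Submodule.span K (Set.range v)) : L) = v i from congrArg Subtype.val (Module.Basis.span_apply hv i)] at this
      rw [this]
      simp [Module.Basis.coord_apply, Finsupp.single_apply]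
    obtain ⟨b, hb⟩ : ∃ b : L, ∀ y, Algebra.trace K L (b * y) = f y := by
      let e := LinearMap.BilinForm.toDual (Algebra.traceForm K L) (traceForm_nondegenerate K L)
      refine ⟨e.symm f, fun y => ?_⟩
      have := LinearMap.congr_fun (e.apply_symm_apply f) y
      rw [← this]
      rfl
    have h1 : ∀ σ : L ≃ₐ[K] L, ∑ i, (c i : M) * algebraMap L M (σ (v i)) = 0 := by
      intro σ
      have h2 := congrArg (fun y => σ • y) hc
      simp only [Finset.smul_sum, smul_zero] at h2
      rw [← h2]
      refine Finset.sum_congr rfl fun i _ => ?_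
      rw [smul_comm, hact]
      rfl
    have h3 : ∑ i, (c i : M) * algebraMap L M (algebraMap K L (f (v i))) = 0 := by
      simp only [← hb, trace_eq_sum_automorphisms, map_sum, map_mul, Finset.mul_sum]
      rw [Finset.sum_comm]
      refine Finset.sum_eq_zero fun σ _ => ?_
      have := congrArg (fun y => algebraMap L M (σ b) * y) (h1 σ)
      simp only [mul_zero, Finset.mul_sum] at this
      rw [← this]
      exact Finset.sum_congr rfl fun i _ => by ring
    simp only [hf] at h3
    simp only [apply_ite (algebraMap K L), apply_ite (algebraMap L M), map_one, map_zero] at h3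
    simp only [mul_ite, mul_one, mul_zero, Finset.sum_ite_eq', Finset.mem_univ, if_true] at h3
    exact Subtype.ext h3
  let E : Submodule K L → Submodule F M := fun W => Submodule.span F (algebraMap L M '' W)
  have hE : ∀ W, Module.finrank F (E W) = Module.finrank K W := by
    intro W
    let b := Module.finBasis K W
    let v : Fin (Module.finrank K W) → L := fun i => (b i : L)
    have hv : LinearIndependent K v :=
      b.linearIndependent.map' W.subtype (Submodule.ker_subtype W)
    have h1 := finrank_span_eq_card (hli v hv)
    have h2 : Submodule.span F (Set.range fun i => algebraMap L M (v i)) = E W := by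
      apply le_antisymm
      · rw [Submodule.span_le]
        rintro _ ⟨i, rfl⟩
        exact Submodule.subset_span ⟨_, (b i).2, rfl⟩
      · rw [Submodule.span_le]
        rintro _ ⟨w, hw, rfl⟩
        have hw' : w = ∑ i, b.repr ⟨w, hw⟩ i • v i := by
          have := congrArg (W.subtype) (b.sum_repr ⟨w, hw⟩)
          rw [map_sum] at this
          simpa using this.symm
        rw [hw', map_sum]
        refine Submodule.sum_mem _ fun i _ => ?_
        rw [Algebra.smul_def, map_mul]
        exact Submodule.smul_mem _ (⟨_, hK _⟩ : F) (Submodule.subset_span ⟨i, rfl⟩)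
    rw [← h2, h1, Fintype.card_fin]
  have hne : ∀ S : Submodule K L, S ≠ ⊥ → E S ≠ ⊥ := by
    intro S hS h
    have := hE S
    rw [h, finrank_bot] at this
    exact hS (Submodule.finrank_eq_zero.1 this.symm)
  have hmul : E A * E B ≤ E (A * B) := by
    rw [Submodule.span_mul_span, Submodule.span_le]
    rintro _ ⟨_, ⟨a, ha, rfl⟩, _, ⟨b, hb, rfl⟩, rfl⟩
    refine Submodule.subset_span ⟨a * b, Submodule.mul_mem_mul ha hb, map_mul _ _ _⟩
  have := core2 (E A) (E B) (hne A hA) (hne B hB)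
  rw [hE, hE, FixedPoints.finrank_eq_card, ← Nat.card_eq_fintype_card,
    IsGalois.card_aut_eq_finrank] at this
  refine this.mono ?_
  rw [← hE]
  exact Submodule.finrank_mono hmul

theorem lowerField {K L : Type*} [Field K] [Field L] [Algebra K L] [FiniteDimensional K L]
    [IsGalois K L] (A B : Submodule K L) (hA : A ≠ ⊥) (hB : B ≠ ⊥) :
    QQ (Module.finrank K L) (Module.finrank K A) (Module.finrank K B) (Module.finrank K ↥(A * B)) := by
  let : MulSemiringAction (L ≃ₐ[K] L) (FractionRing (Polynomial L)) :=
    IsFractionRing.mulSemiringAction (L ≃ₐ[K] L) (Polynomial L) (FractionRing (Polynomial L))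
  have : Infinite (FractionRing (Polynomial L)) :=
    Infinite.of_injective _ (IsFractionRing.injective (Polynomial L) (FractionRing (Polynomial L)))
  refine lowerField1 (M := FractionRing (Polynomial L)) ?_ A B hA hB
  intro σ x
  rw [IsScalarTower.algebraMap_apply L (Polynomial L) (FractionRing (Polynomial L)),
    ← algebraMap.coe_smul',
    IsScalarTower.algebraMap_apply L (Polynomial L) (FractionRing (Polynomial L))]
  congr 1
  rw [Polynomial.algebraMap_eq, Polynomial.smul_C]
  rfl

theorem exists_subgroup_card (N : ℕ) : ∀ (G : Type*) [CommGroup G] [Finite G], Nat.card G ≤ N →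
    ∀ d, d ∣ Nat.card G → ∃ H : Subgroup G, Nat.card H = d := by
  induction N with
  | zero => intro G _ _ h; have := Nat.card_pos (α := G); omega
  | succ N ih =>
  intro G _ _ hN d hd
  by_cases h1 : d = 1
  · exact ⟨⊥, by simp [h1]⟩
  obtain ⟨p, hp, hpd⟩ := Nat.exists_prime_and_dvd h1
  have := Fact.mk hp
  obtain ⟨x, hx⟩ := exists_prime_orderOf_dvd_card' p (hpd.trans hd)
  let C := Subgroup.zpowers x
  have hC : Nat.card C = p := by rw [Nat.card_zpowers, hx]
  have hcard := Subgroup.card_eq_card_quotient_mul_card_subgroup C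
  rw [hC] at hcard
  obtain ⟨e, rfl⟩ := hpd
  have hpos : 0 < Nat.card (G ⧸ C) := Nat.card_pos
  have hp2 := hp.two_le
  obtain ⟨H, hH⟩ := ih (G ⧸ C) (by nlinarith) e (by
    rw [hcard, mul_comm] at hd
    exact Nat.dvd_of_mul_dvd_mul_right hp.pos hd)
  refine ⟨H.comap (QuotientGroup.mk' C), ?_⟩
  have h2 := Nat.card_congr (QuotientGroup.preimageMkEquivSubgroupProdSet C (H : Set (G ⧸ C)))
  rw [Nat.card_prod, hC] at h2
  exact h2.trans (congrArg (p * ·) hH)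

theorem exists_enum (N : ℕ) : ∀ (G : Type*) [CommGroup G] [Finite G], Nat.card G ≤ N →
    ∃ e : ℕ → G, (∀ i j, i < Nat.card G → j < Nat.card G → e i = e j → i = j) ∧
      ∀ i j, ∃ k ≤ i + j, e i * e j = e k := by
  induction N with
  | zero => intro G _ _ h; have := Nat.card_pos (α := G); omega
  | succ N ih =>
  intro G _ _ hN
  by_cases h1 : Nat.card G = 1
  · refine ⟨fun _ => 1, ?_, fun i j => ⟨0, by simp⟩⟩
    intro i j hi hj _
    omega
  obtain ⟨p, hp, hpd⟩ := Nat.exists_prime_and_dvd h1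
  have := Fact.mk hp
  obtain ⟨h, hh⟩ := hpd
  obtain ⟨H, hH⟩ := exists_subgroup_card _ G le_rfl h ⟨p, by rw [hh, mul_comm]⟩
  have hcard := Subgroup.card_eq_card_quotient_mul_card_subgroup H
  have hpos : 0 < Nat.card H := Nat.card_pos
  have hQ : Nat.card (G ⧸ H) = p := by
    rw [hH] at hcard hpos
    exact Nat.eq_of_mul_eq_mul_right hpos (by rw [← hcard, hh])
  have hp2 := hp.two_le
  obtain ⟨e, he1, he2⟩ := ih H (by rw [hH] at *; nlinarith)
  have hes : ∀ x : H, ∃ k < Nat.card H, e k = x := by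
    have hb : Function.Bijective (fun i : Fin (Nat.card H) => e i) := by
      rw [Nat.bijective_iff_injective_and_card]
      refine ⟨fun i j hij => Fin.ext (he1 _ _ i.2 j.2 hij), by simp⟩
    intro x
    obtain ⟨k, hk⟩ := hb.2 x
    exact ⟨k, k.2, hk⟩
  have hcyc : IsCyclic (G ⧸ H) := isCyclic_of_prime_card hQ
  obtain ⟨g', hg'⟩ := IsCyclic.exists_ofOrder_eq_natCard (α := G ⧸ H)
  obtain ⟨g, rfl⟩ := QuotientGroup.mk_surjective g'
  rw [hQ] at hg'
  set m := Nat.card H with hm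
  refine ⟨fun i => g ^ (i / m) * (e (i % m) : G), ?_, ?_⟩
  · intro i j hi hj hij
    rw [hcard, hQ] at hi hj
    have hi' : i / m < p := Nat.div_lt_of_lt_mul (by rwa [mul_comm])
    have hj' : j / m < p := Nat.div_lt_of_lt_mul (by rwa [mul_comm])
    have h2 := congrArg (fun y : G => (y : G ⧸ H)) hij
    have hz : ∀ x : H, ((x : G) : G ⧸ H) = 1 := fun x => (QuotientGroup.eq_one_iff _).2 x.2
    simp only [QuotientGroup.mk_mul, hz, mul_one, QuotientGroup.mk_pow] at h2
    have h3 : i / m = j / m := by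
      refine pow_injOn_Iio_orderOf (x := (g : G ⧸ H)) ?_ ?_ h2
      · simpa [hg'] using hi'
      · simpa [hg'] using hj'
    simp only [h3] at hij
    have h4 := he1 _ _ (Nat.mod_lt i hpos) (Nat.mod_lt j hpos) (Subtype.ext (mul_left_cancel hij))
    rw [← Nat.div_add_mod i m, ← Nat.div_add_mod j m, h3, h4]
  · intro i j
    obtain ⟨k, hk1, hk2, hk3⟩ : ∃ k < m, k ≤ i % m + j % m ∧ e (i % m) * e (j % m) = e k := by
      by_cases hlt : i % m + j % m < m
      · obtain ⟨k, hk, hk'⟩ := he2 (i % m) (j % m)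
        exact ⟨k, by omega, hk, hk'⟩
      · obtain ⟨k, hk, hk'⟩ := hes (e (i % m) * e (j % m))
        exact ⟨k, hk, by omega, hk'.symm⟩
    refine ⟨m * (i / m + j / m) + k, ?_, ?_⟩
    · have := Nat.div_add_mod i m
      have := Nat.div_add_mod j m
      rw [mul_add]
      omega
    · have h5 : (m * (i / m + j / m) + k) / m = i / m + j / m := by
        rw [Nat.mul_add_div hpos, Nat.div_eq_of_lt hk1, add_zero]
      have h6 : (m * (i / m + j / m) + k) % m = k := by
        rw [Nat.mul_add_mod, Nat.mod_eq_of_lt hk1]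
      simp only [h5, h6, ← hk3, pow_add, Subgroup.coe_mul]
      rw [mul_mul_mul_comm]

theorem upperGroup {G : Type*} [CommGroup G] [Finite G] {r s m : ℕ}
    (hr : 0 < r) (hs : 0 < s) (hrn : r ≤ Nat.card G) (hsn : s ≤ Nat.card G)
    (hQ : QQ (Nat.card G) r s m) :
    ∃ A B : Finset G, A.card = r ∧ B.card = s ∧ (A * B).card ≤ m := by
  have := Fintype.ofFinite G
  rw [Nat.card_eq_fintype_card, ← Finset.card_univ] at hrn hsn
  by_cases hm : Nat.card G ≤ m
  · obtain ⟨A, -, hA⟩ := Finset.exists_subset_card_eq hrn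
    obtain ⟨B, -, hB⟩ := Finset.exists_subset_card_eq hsn
    refine ⟨A, B, hA, hB, (Finset.card_le_univ _).trans ?_⟩
    rwa [← Nat.card_eq_fintype_card]
  obtain ⟨d, a, b, hd, hdn, ha, hb, hab⟩ := hQ
  obtain ⟨H, hH⟩ := exists_subgroup_card _ G le_rfl d hdn
  have hcard := Subgroup.card_eq_card_quotient_mul_card_subgroup H
  rw [hH] at hcard
  obtain ⟨e, he1, he2⟩ := exists_enum _ (G ⧸ H) le_rfl
  have ha0 : 0 < a := by by_contra h; simp at h; subst h; omega
  have hb0 : 0 < b := by by_contra h; simp at h; subst h; omega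
  have hlt : a + b - 1 < Nat.card (G ⧸ H) := by
    obtain ⟨c, hc⟩ : ∃ c, a + b = c + 1 := ⟨a + b - 1, by omega⟩
    rw [hc] at hab ⊢
    simp only [Nat.add_sub_cancel]
    by_contra hcon
    push Not at hcon hm
    have := Nat.mul_le_mul_left d hcon
    rw [mul_comm, ← hcard] at this
    rw [mul_add] at hab
    omega
  let P : ℕ → Finset G := fun c => Finset.univ.filter fun x => ∃ i < c, (x : G ⧸ H) = e i
  have hP : ∀ c ≤ Nat.card (G ⧸ H), (P c).card = d * c := by
    intro c hc
    have hQf := Fintype.ofFinite (G ⧸ H)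
    have h1 : P c = ((Finset.range c).image e).biUnion
        (fun q => Finset.univ.filter fun x : G => (x : G ⧸ H) = q) := by
      ext x; simp [P, eq_comm]
    rw [h1, Finset.card_biUnion]
    · rw [Finset.sum_const_nat (m := d), Finset.card_image_of_injOn, Finset.card_range, mul_comm]
      · intro i hi j hj hij
        simp only [Finset.coe_range, Set.mem_Iio] at hi hj
        exact he1 i j (by omega) (by omega) hij
      · intro q _
        obtain ⟨y, rfl⟩ := QuotientGroup.mk_surjective q
        have h2 := Nat.card_congr (QuotientGroup.preimageMkEquivSubgroupProdSet H {(y : G ⧸ H)})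
        rw [Nat.card_prod, hH, Nat.card_unique (α := ({(y : G ⧸ H)} : Set (G ⧸ H))), mul_one] at h2
        rw [← h2, Nat.card_eq_fintype_card, Fintype.card_subtype]
        congr 1
        ext x
        simp
    · intro q _ q' _ hne
      simp only [Function.onFun, Finset.disjoint_left, Finset.mem_filter]
      rintro x ⟨-, rfl⟩ ⟨-, h⟩
      exact hne h
  obtain ⟨A, hAs, hA⟩ := Finset.exists_subset_card_eq (ha.trans_eq (hP a (by omega)).symm)
  obtain ⟨B, hBs, hB⟩ := Finset.exists_subset_card_eq (hb.trans_eq (hP b (by omega)).symm)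
  refine ⟨A, B, hA, hB, ?_⟩
  have hsub : A * B ⊆ P (a + b - 1) := by
    intro z hz
    obtain ⟨x, hx, y, hy, rfl⟩ := Finset.mem_mul.1 hz
    obtain ⟨-, i, hi, hx⟩ := Finset.mem_filter.1 (hAs hx)
    obtain ⟨-, j, hj, hy⟩ := Finset.mem_filter.1 (hBs hy)
    obtain ⟨k, hk, hk'⟩ := he2 i j
    refine Finset.mem_filter.2 ⟨Finset.mem_univ _, k, by omega, ?_⟩
    rw [QuotientGroup.mk_mul, hx, hy, hk']
  refine (Finset.card_le_card hsub).trans ?_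
  rw [hP _ hlt.le]
  obtain ⟨c, hc⟩ : ∃ c, a + b = c + 1 := ⟨a + b - 1, by omega⟩
  rw [hc] at hab ⊢
  simp only [Nat.add_sub_cancel]
  rw [mul_add] at hab
  omega

theorem exists_subspace {K V : Type*} [Field K] [AddCommGroup V] [Module K V] [FiniteDimensional K V]
    (P : Submodule K V) (r : ℕ) (hr : r ≤ Module.finrank K P) :
    ∃ A : Submodule K V, A ≤ P ∧ Module.finrank K A = r := by
  let b := Module.finBasis K P
  let v : Fin r → V := fun i => (b (Fin.castLE hr i) : V)
  have hv : LinearIndependent K v :=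
    (b.linearIndependent.map' P.subtype (Submodule.ker_subtype P)).comp _ (Fin.castLE_injective hr)
  refine ⟨Submodule.span K (Set.range v), ?_, ?_⟩
  · rw [Submodule.span_le]
    rintro _ ⟨i, rfl⟩
    exact (b _).2
  · rw [finrank_span_eq_card hv, Fintype.card_fin]

theorem exists_interm {K L : Type*} [Field K] [Field L] [Algebra K L] [FiniteDimensional K L]
    [IsGalois K L] (hab : ∀ σ τ : L ≃ₐ[K] L, σ * τ = τ * σ) (d : ℕ) (hd : d ∣ Module.finrank K L) :
    ∃ F : IntermediateField K L, Module.finrank K F = d := by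
  let : CommGroup (L ≃ₐ[K] L) := { (inferInstance : Group (L ≃ₐ[K] L)) with mul_comm := hab }
  obtain ⟨c, hc⟩ := hd
  obtain ⟨H, hH⟩ := exists_subgroup_card _ (L ≃ₐ[K] L) le_rfl c
    (by rw [IsGalois.card_aut_eq_finrank, hc]; exact ⟨d, mul_comm _ _⟩)
  refine ⟨IntermediateField.fixedField H, ?_⟩
  have h1 := IntermediateField.finrank_fixedField_eq_card H
  have h2 := Module.finrank_mul_finrank K (IntermediateField.fixedField H) L
  have h3 : 0 < c := by rw [← hH]; exact Nat.card_pos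
  rw [h1, hH, hc] at h2
  exact Nat.eq_of_mul_eq_mul_right h3 h2

theorem upperField {K L : Type*} [Field K] [Field L] [Algebra K L] [FiniteDimensional K L]
    [IsGalois K L] (hab : ∀ σ τ : L ≃ₐ[K] L, σ * τ = τ * σ) {r s m : ℕ}
    (hr : 0 < r) (hs : 0 < s) (hrn : r ≤ Module.finrank K L) (hsn : s ≤ Module.finrank K L)
    (hQ : QQ (Module.finrank K L) r s m) :
    ∃ A B : Submodule K L, Module.finrank K A = r ∧ Module.finrank K B = s ∧
      Module.finrank K ↥(A * B) ≤ m := by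
  by_cases hm : Module.finrank K L ≤ m
  · obtain ⟨A, -, hA⟩ := exists_subspace (⊤ : Submodule K L) r (by rwa [finrank_top])
    obtain ⟨B, -, hB⟩ := exists_subspace (⊤ : Submodule K L) s (by rwa [finrank_top])
    exact ⟨A, B, hA, hB, (Submodule.finrank_le _).trans hm⟩
  obtain ⟨d, a, b, hd, hdn, ha, hb, habm⟩ := hQ
  obtain ⟨F, hF⟩ := exists_interm hab d hdn
  have hcard := Module.finrank_mul_finrank K F L
  rw [hF] at hcard
  have ha0 : 0 < a := by by_contra h; simp at h; subst h; omega
  have hb0 : 0 < b := by by_contra h; simp at h; subst h; omega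
  have hlt : a + b - 1 < Module.finrank F L := by
    obtain ⟨c, hc⟩ : ∃ c, a + b = c + 1 := ⟨a + b - 1, by omega⟩
    rw [hc] at habm ⊢
    simp only [Nat.add_sub_cancel]
    by_contra hcon
    push Not at hcon hm
    have := Nat.mul_le_mul_left d hcon
    rw [hcard] at this
    rw [mul_add] at habm
    omega
  obtain ⟨θ, hθ⟩ := Field.exists_primitive_element F L
  have hdeg := (Field.primitive_element_iff_minpoly_natDegree_eq F θ).1 hθ
  let P : ℕ → Submodule F L := fun c => Submodule.span F (Set.range fun i : Fin c => θ ^ (i : ℕ))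
  have hP : ∀ c ≤ Module.finrank F L, Module.finrank K ((P c).restrictScalars K) = d * c := by
    intro c hc
    have h1 : LinearIndependent F (fun i : Fin c => θ ^ (i : ℕ)) :=
      (linearIndependent_pow (K := F) θ).comp (Fin.castLE (hc.trans_eq hdeg.symm))
        (Fin.castLE_injective _)
    have h2 := finrank_span_eq_card h1
    rw [Fintype.card_fin] at h2
    have h3 := Module.finrank_mul_finrank K F (P c)
    rw [hF] at h3
    exact h3.symm.trans (congrArg (d * ·) h2)
  obtain ⟨A, hAs, hA⟩ := exists_subspace _ r (ha.trans_eq (hP a (by omega)).symm)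
  obtain ⟨B, hBs, hB⟩ := exists_subspace _ s (hb.trans_eq (hP b (by omega)).symm)
  refine ⟨A, B, hA, hB, ?_⟩
  have hPP : P a * P b ≤ P (a + b - 1) := by
    rw [Submodule.span_mul_span, Submodule.span_le]
    rintro _ ⟨_, ⟨i, rfl⟩, _, ⟨j, rfl⟩, rfl⟩
    refine Submodule.subset_span ⟨⟨i + j, by omega⟩, ?_⟩
    simp [pow_add]
  have hsub : A * B ≤ (P (a + b - 1)).restrictScalars K := by
    rw [Submodule.mul_le]
    intro x hx y hy
    exact hPP (Submodule.mul_mem_mul (hAs hx) (hBs hy))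
  refine (Submodule.finrank_mono hsub).trans ?_
  rw [hP _ hlt.le]
  obtain ⟨c, hc⟩ : ∃ c, a + b = c + 1 := ⟨a + b - 1, by omega⟩
  rw [hc] at habm ⊢
  simp only [Nat.add_sub_cancel]
  rw [mul_add] at habm
  omega

/-- Corollary 6.2: for a finite Galois extension `K ⊆ L` with abelian Galois group `G`
of order `n` and positive `r, s ≤ n`, the minimum of `dim_K ⟨AB⟩` over `K`-subspaces
`A, B` of `L` with `dim_K A = r`, `dim_K B = s` equals the minimum of `|A'B'|` over
subsets `A', B' ⊆ G` with `|A'| = r`, `|B'| = s`. -/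
theorem stmt_13 (K L : Type*) [Field K] [Field L] [Algebra K L]
    [FiniteDimensional K L] [IsGalois K L]
    (hab : ∀ σ τ : L ≃ₐ[K] L, σ * τ = τ * σ)
    (n : ℕ) (hn : Module.finrank K L = n)
    (r s : ℕ) (hr : 0 < r) (hs : 0 < s) (hrn : r ≤ n) (hsn : s ≤ n) :
    sInf {m : ℕ | ∃ A B : Submodule K L,
        Module.finrank K A = r ∧ Module.finrank K B = s ∧ Module.finrank K ↥(A * B) = m}
      = sInf {m : ℕ | ∃ A' B' : Finset (L ≃ₐ[K] L),
          A'.card = r ∧ B'.card = s ∧ (A' * B').card = m} := by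
  subst hn
  have hcard : Nat.card (L ≃ₐ[K] L) = Module.finrank K L := IsGalois.card_aut_eq_finrank K L
  have hQ0 : QQ (Module.finrank K L) r s (r + s) :=
    ⟨1, r, s, one_pos, one_dvd _, by simp, by simp, by simp⟩
  have hUG : ∀ m, QQ (Module.finrank K L) r s m → ∃ A' B' : Finset (L ≃ₐ[K] L),
      A'.card = r ∧ B'.card = s ∧ (A' * B').card ≤ m := by
    intro m hQ
    let : CommGroup (L ≃ₐ[K] L) := { (inferInstance : Group (L ≃ₐ[K] L)) with mul_comm := hab }
    obtain ⟨A, B, h1, h2, h3⟩ := upperGroup (G := L ≃ₐ[K] L) hr hs (by rwa [hcard]) (by rwa [hcard])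
      (hcard ▸ hQ)
    refine ⟨A, B, h1, h2, ?_⟩
    convert h3
  have hLG : ∀ A' B' : Finset (L ≃ₐ[K] L), A'.card = r → B'.card = s →
      QQ (Module.finrank K L) r s (A' * B').card := by
    intro A B hA hB
    let : CommGroup (L ≃ₐ[K] L) := { (inferInstance : Group (L ≃ₐ[K] L)) with mul_comm := hab }
    have := lowerGroup (G := L ≃ₐ[K] L) A B (Finset.card_pos.1 (by omega))
      (Finset.card_pos.1 (by omega))
    rw [hcard, hA, hB] at this
    convert this
  apply le_antisymm
  · obtain ⟨A0, B0, h1, h2, -⟩ := hUG _ hQ0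
    refine le_csInf ⟨_, A0, B0, h1, h2, rfl⟩ ?_
    rintro m ⟨A, B, hA, hB, rfl⟩
    obtain ⟨A', B', h1, h2, h3⟩ := upperField hab hr hs hrn hsn (hLG A B hA hB)
    refine le_trans (Nat.sInf_le ?_) h3
    exact ⟨A', B', h1, h2, rfl⟩
  · obtain ⟨A0, B0, h1, h2, -⟩ := upperField hab hr hs hrn hsn hQ0
    refine le_csInf ⟨_, A0, B0, h1, h2, rfl⟩ ?_
    rintro m ⟨A, B, hA, hB, rfl⟩
    have hQ := lowerField A B (by rintro rfl; rw [finrank_bot] at hA; omega)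
      (by rintro rfl; rw [finrank_bot] at hB; omega)
    rw [hA, hB] at hQ
    obtain ⟨A', B', h1, h2, h3⟩ := hUG _ hQ
    refine le_trans (Nat.sInf_le ?_) h3
    exact ⟨A', B', h1, h2, rfl⟩
end

section
/- Let K ⊆ L be a commutative field extension such that for all nonzero finite-dimensional K-subspaces A, B of L one has dim_K⟨AB⟩ ≥ dim_K A + dim_K B − dim_K H, where H = {x ∈ L : x·⟨AB⟩ ⊆ ⟨AB⟩} is the stabilizer of ⟨AB⟩. Then for all positive integers r, s with r, s ≤ dim_K L, the minimum of dim_K⟨AB⟩ over all K-subspaces A, B of L with dim_K A = r and dim_K B = s equals the minimum of (⌈r/h⌉ + ⌈s/h⌉ − 1)·h over all h = [H:K] where H ranges over the finite-dimensional intermediate fields K ⊆ H ⊆ L. -/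
/-- The stabilizer `{x ∈ L : x·V ⊆ V}` of a `K`-subspace `V` of `L`, as a `K`-subspace. -/
def mulStabilizer (K L : Type*) [Field K] [Field L] [Algebra K L]
    (V : Submodule K L) : Submodule K L where
  carrier := {x : L | ∀ v ∈ V, x * v ∈ V}
  add_mem' := by
    intro x y hx hy v hv
    rw [add_mul]
    exact V.add_mem (hx v hv) (hy v hv)
  zero_mem' := by
    intro v hv
    rw [zero_mul]
    exact V.zero_mem
  smul_mem' := by
    intro c x hx v hv
    rw [Algebra.smul_def, mul_assoc, ← Algebra.smul_def]
    exact V.smul_mem c (hx v hv)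


open Module IntermediateField

lemma cutDown {K L : Type*} [Field K] [Field L] [Algebra K L] (V : Submodule K L) (n : ℕ)
    (hn : n ≤ finrank K V) : ∃ W : Submodule K L, W ≤ V ∧ finrank K W = n := by
  obtain ⟨f, hf⟩ := exists_linearIndependent_of_le_finrank hn
  have hf' : LinearIndependent K (fun i => (f i : L)) :=
    hf.map' V.subtype (Submodule.ker_subtype V)
  refine ⟨Submodule.span K (Set.range (fun i => (f i : L))), ?_, ?_⟩
  · rw [Submodule.span_le]
    rintro _ ⟨i, rfl⟩
    exact (f i).2
  · rw [finrank_span_eq_card hf']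
    simp

/-- The map `(c, x) ↦ ∑ c_j α^j + x α^a`. -/
def layerMap {K L : Type*} [Field K] [Field L] [Algebra K L] (M U : Submodule K L) (α : L)
    (a : ℕ) : ((Fin a → M) × U) →ₗ[K] L where
  toFun p := (∑ j : Fin a, (p.1 j : L) * α ^ (j : ℕ)) + (p.2 : L) * α ^ a
  map_add' p q := by
    simp only [Prod.fst_add, Prod.snd_add, Pi.add_apply, Submodule.coe_add, add_mul,
      Finset.sum_add_distrib]
    ring
  map_smul' c p := by
    simp only [Prod.smul_fst, Prod.smul_snd, Pi.smul_apply, Submodule.coe_smul, smul_mul_assoc,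
      RingHom.id_apply, smul_add, Finset.smul_sum]

lemma layer_mem_lt {K L : Type*} [Field K] [Field L] [Algebra K L] (M U : Submodule K L) (α : L)
    (a j : ℕ) (hj : j < a) (c : L) (hc : c ∈ M) :
    c * α ^ j ∈ LinearMap.range (layerMap M U α a) := by
  refine ⟨(Pi.single ⟨j, hj⟩ ⟨c, hc⟩, 0), ?_⟩
  simp only [layerMap, LinearMap.coe_mk, AddHom.coe_mk]
  rw [Finset.sum_eq_single (⟨j, hj⟩ : Fin a)]
  · simp
  · intro b _ hb
    simp [Pi.single_eq_of_ne hb]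
  · simp

lemma layer_mem_eq {K L : Type*} [Field K] [Field L] [Algebra K L] (M U : Submodule K L) (α : L)
    (a : ℕ) (c : L) (hc : c ∈ U) :
    c * α ^ a ∈ LinearMap.range (layerMap M U α a) := by
  refine ⟨(0, ⟨c, hc⟩), ?_⟩
  simp [layerMap]

lemma layer_mul {K L : Type*} [Field K] [Field L] [Algebra K L] (M : IntermediateField K L)
    (U V : Submodule K L) (hU : ∀ x ∈ U, x ∈ M) (hV : ∀ x ∈ V, x ∈ M) (α : L) (a b : ℕ) :
    LinearMap.range (layerMap M.toSubalgebra.toSubmodule U α a) *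
      LinearMap.range (layerMap M.toSubalgebra.toSubmodule V α b) ≤
    LinearMap.range (layerMap M.toSubalgebra.toSubmodule (U * V) α (a + b)) := by
  rw [Submodule.mul_le]
  rintro _ ⟨⟨c, x⟩, rfl⟩ _ ⟨⟨d, y⟩, rfl⟩
  have hc : ∀ i, (c i : L) ∈ M := fun i => (c i).2
  have hd : ∀ i, (d i : L) ∈ M := fun i => (d i).2
  have key : ∀ (p q : L) (i j : ℕ), p * α ^ i * (q * α ^ j) = (p * q) * α ^ (i + j) := by
    intros; ring
  have lt : ∀ (p q : L) (i j : ℕ), p ∈ M → q ∈ M → i + j < a + b →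
      p * α ^ i * (q * α ^ j) ∈
        LinearMap.range (layerMap M.toSubalgebra.toSubmodule (U * V) α (a + b)) := by
    intro p q i j hp hq h
    rw [key]
    exact layer_mem_lt _ _ _ _ _ h _ (M.mul_mem hp hq)
  simp only [layerMap, LinearMap.coe_mk, AddHom.coe_mk]
  rw [add_mul, mul_add, mul_add, Finset.sum_mul_sum, Finset.sum_mul, Finset.mul_sum]
  refine add_mem (add_mem ?_ ?_) (add_mem ?_ ?_)
  · exact sum_mem fun i _ => sum_mem fun j _ => lt _ _ _ _ (hc i) (hd j) (by omega)
  · exact sum_mem fun i _ => lt _ _ _ _ (hc i) (hV _ y.2) (by omega)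
  · exact sum_mem fun i _ => lt _ _ _ _ (hU _ x.2) (hd i) (by omega)
  · rw [key]
    exact layer_mem_eq _ _ _ _ _ (Submodule.mul_mem_mul x.2 y.2)

lemma layer_inj {K L : Type*} [Field K] [Field L] [Algebra K L] (M : IntermediateField K L)
    (U : Submodule K L) (hU : ∀ x ∈ U, x ∈ M) (α : L) (a D : ℕ) (ha : a < D)
    (hD : LinearIndependent M (fun i : Fin D => α ^ (i : ℕ))) :
    Function.Injective (layerMap M.toSubalgebra.toSubmodule U α a) := by
  rw [← LinearMap.ker_eq_bot, LinearMap.ker_eq_bot']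
  rintro ⟨c, x⟩ h
  have hD' : LinearIndependent M (fun i : Fin (a + 1) => α ^ (i : ℕ)) :=
    hD.comp (Fin.castLE (by omega)) (Fin.castLE_injective _)
  rw [Fintype.linearIndependent_iff] at hD'
  have h2 := hD' (Fin.snoc (α := fun _ => M) (fun i => (⟨c i, (c i).2⟩ : M)) ⟨x, hU _ x.2⟩) (by
    rw [Fin.sum_univ_castSucc]
    simpa [layerMap, Algebra.smul_def] using h)
  have h3 : ∀ i, c i = 0 := by
    intro i
    have := h2 i.castSucc
    simp only [Fin.snoc_castSucc] at this
    exact Subtype.ext (congrArg (fun z : M => (z : L)) this)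
  have h4 : x = 0 := by
    have := h2 (Fin.last a)
    simp only [Fin.snoc_last] at this
    exact Subtype.ext (congrArg (fun z : M => (z : L)) this)
  rw [h4, funext h3]
  rfl

/-- Small products inside an intermediate field. -/
def SmallProd {K L : Type*} [Field K] [Field L] [Algebra K L] (M : IntermediateField K L) (n : ℕ) :
    Prop :=
  ∀ r s : ℕ, 0 < r → 0 < s → r ≤ n → s ≤ n → ∃ A B : Submodule K L,
    (∀ x ∈ A, x ∈ M) ∧ (∀ x ∈ B, x ∈ M) ∧ finrank K A = r ∧ finrank K B = s ∧
    finrank K ↥(A * B) + 1 ≤ r + s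

lemma decomp (d D r : ℕ) (hr : 0 < r) (h : r ≤ d * D) :
    ∃ a u, a < D ∧ 0 < u ∧ u ≤ d ∧ r = a * d + u := by
  have hd : 0 < d := by
    rcases Nat.eq_zero_or_pos d with h0 | h0
    · subst h0; omega
    · exact h0
  refine ⟨(r - 1) / d, (r - 1) % d + 1, ?_, by omega, Nat.mod_lt _ hd, ?_⟩
  · rw [Nat.div_lt_iff_lt_mul hd, mul_comm]; omega
  · have := Nat.div_add_mod' (r - 1) d
    omega

lemma finite_mul {K L : Type*} [Field K] [Field L] [Algebra K L] (A B : Submodule K L)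
    [hA : FiniteDimensional K A] [hB : FiniteDimensional K B] :
    FiniteDimensional K ↥(A * B) :=
  Module.Finite.iff_fg.2 ((Module.Finite.iff_fg.1 hA).mul (Module.Finite.iff_fg.1 hB))

lemma core {K L : Type*} [Field K] [Field L] [Algebra K L] (M N : IntermediateField K L)
    [FiniteDimensional K M] (hM : SmallProd M (finrank K M)) (α : L) (hMN : M ≤ N) (hα : α ∈ N)
    (D : ℕ) (hD : LinearIndependent M (fun i : Fin D => α ^ (i : ℕ))) :
    SmallProd N (finrank K M * D) := by
  intro r s hr hs hrn hsn
  obtain ⟨a, u, ha, hu, hud, rfl⟩ := decomp _ _ _ hr hrn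
  obtain ⟨b, v, hb, hv, hvd, rfl⟩ := decomp _ _ _ hs hsn
  obtain ⟨A, B, hAM, hBM, hA, hB, hAB⟩ := hM u v hu hv hud hvd
  have : FiniteDimensional K M.toSubalgebra.toSubmodule := ‹FiniteDimensional K M›
  have hMM : finrank K M.toSubalgebra.toSubmodule = finrank K M := rfl
  have fA : FiniteDimensional K A := FiniteDimensional.of_finrank_pos (by omega)
  have fB : FiniteDimensional K B := FiniteDimensional.of_finrank_pos (by omega)
  have fAB : FiniteDimensional K ↥(A * B) := finite_mul A B
  have cont : ∀ (U : Submodule K L) (hU : ∀ x ∈ U, x ∈ M) (a : ℕ),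
      ∀ x ∈ LinearMap.range (layerMap M.toSubalgebra.toSubmodule U α a), x ∈ N := by
    rintro U hU a _ ⟨⟨c, x⟩, rfl⟩
    simp only [layerMap, LinearMap.coe_mk, AddHom.coe_mk]
    exact add_mem (sum_mem fun i _ => mul_mem (hMN (c i).2) (pow_mem hα _))
      (mul_mem (hMN (hU _ x.2)) (pow_mem hα _))
  refine ⟨_, _, cont A hAM a, cont B hBM b, ?_, ?_, ?_⟩
  · rw [LinearMap.finrank_range_of_inj (layer_inj M A hAM α a D ha hD), finrank_prod,
      finrank_pi_fintype]
    simp [hA, hMM]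
  · rw [LinearMap.finrank_range_of_inj (layer_inj M B hBM α b D hb hD), finrank_prod,
      finrank_pi_fintype]
    simp [hB, hMM]
  · have h1 := Submodule.finrank_mono (layer_mul M A B hAM hBM α a b)
    have h2 := LinearMap.finrank_range_le (layerMap M.toSubalgebra.toSubmodule (A * B) α (a + b))
    rw [finrank_prod, finrank_pi_fintype] at h2
    simp only [hMM, Finset.sum_const, Finset.card_univ, Fintype.card_fin, smul_eq_mul,
      add_mul] at h2
    omega

lemma smallProd_bot {K L : Type*} [Field K] [Field L] [Algebra K L] :
    SmallProd (⊥ : IntermediateField K L) (finrank K (⊥ : IntermediateField K L)) := by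
  intro r s hr hs h1 h2
  rw [IntermediateField.finrank_bot] at h1 h2
  have h : finrank K ↥(1 : Submodule K L) = 1 := by
    rw [Submodule.one_eq_span]
    exact finrank_span_singleton one_ne_zero
  have hm : ∀ x ∈ (1 : Submodule K L), x ∈ (⊥ : IntermediateField K L) := by
    intro x hx
    rw [Submodule.mem_one] at hx
    exact IntermediateField.mem_bot.2 hx
  refine ⟨1, 1, hm, hm, by omega, by omega, ?_⟩
  rw [mul_one]
  omega

lemma smallProd_adjoin {K L : Type*} [Field K] [Field L] [Algebra K L]
    [Algebra.IsAlgebraic K L] (S : Finset L) :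
    FiniteDimensional K (adjoin K (S : Set L)) ∧
      SmallProd (adjoin K (S : Set L)) (finrank K (adjoin K (S : Set L))) := by
  refine induction_on_adjoin_finset S
    (fun M => FiniteDimensional K M ∧ SmallProd M (finrank K M)) ⟨inferInstance, smallProd_bot⟩ ?_
  rintro M x - ⟨hf, hM⟩
  have hx : IsIntegral M x := (Algebra.IsIntegral.isIntegral (R := K) x).tower_top
  have h1 : FiniteDimensional M M⟮x⟯ := adjoin.finiteDimensional hx
  have h2 : FiniteDimensional K M⟮x⟯ := FiniteDimensional.trans K M M⟮x⟯
  have h3 : finrank K (M⟮x⟯.restrictScalars K) = finrank K M * (minpoly M x).natDegree := by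
    rw [← adjoin.finrank hx]
    exact (finrank_mul_finrank K M M⟮x⟯).symm
  refine ⟨h2, ?_⟩
  rw [h3]
  refine core M _ hM x ?_ (mem_adjoin_simple_self M x) _ (linearIndependent_pow x)
  intro y hy
  exact M⟮x⟯.algebraMap_mem ⟨y, hy⟩

lemma smallProd_all {K L : Type*} [Field K] [Field L] [Algebra K L] (r s : ℕ) (hr : 0 < r)
    (hs : 0 < s) (hrL : (r : Cardinal) ≤ Module.rank K L) (hsL : (s : Cardinal) ≤ Module.rank K L) :
    ∃ A B : Submodule K L, finrank K A = r ∧ finrank K B = s ∧ finrank K ↥(A * B) + 1 ≤ r + s := by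
  by_cases halg : Algebra.IsAlgebraic K L
  · classical
    obtain ⟨S, hS, hSi⟩ := exists_finset_linearIndependent_of_le_rank hrL
    obtain ⟨T, hT, hTi⟩ := exists_finset_linearIndependent_of_le_rank hsL
    obtain ⟨hf, hQ⟩ := smallProd_adjoin (K := K) (S ∪ T)
    have aux : ∀ S' : Finset L, S' ⊆ S ∪ T → LinearIndepOn K id (S' : Set L) →
        S'.card ≤ finrank K (adjoin K ((S ∪ T : Finset L) : Set L)) := by
      intro S' hS' hi
      have h1 : finrank K (Submodule.span K (S' : Set L)) = S'.card :=
        finrank_span_finset_eq_card hi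
      rw [← h1]
      have : FiniteDimensional K
        (adjoin K ((S ∪ T : Finset L) : Set L)).toSubalgebra.toSubmodule := hf
      refine Submodule.finrank_mono
        (t := (adjoin K ((S ∪ T : Finset L) : Set L)).toSubalgebra.toSubmodule) ?_
      rw [Submodule.span_le]
      intro x hx
      exact subset_adjoin K _ (Finset.mem_coe.2 (hS' hx))
    obtain ⟨A, B, -, -, h⟩ := hQ r s hr hs (hS ▸ aux S Finset.subset_union_left hSi)
      (hT ▸ aux T Finset.subset_union_right hTi)
    exact ⟨A, B, h⟩
  · have : ∃ x : L, Transcendental K x := by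
      by_contra! hcon
      exact halg ⟨fun x => by simpa [Transcendental] using hcon x⟩
    obtain ⟨x, hx⟩ := this
    have hx' : Transcendental (⊥ : IntermediateField K L) x := by
      intro h
      exact hx (h.restrictScalars K)
    have hli : LinearIndependent (⊥ : IntermediateField K L)
        (fun i : Fin (max r s) => x ^ (i : ℕ)) := by
      have h0 : LinearIndependent (⊥ : IntermediateField K L) (fun i : ℕ => x ^ i) :=
        by
        have h1 := (Polynomial.basisMonomials (⊥ : IntermediateField K L)).linearIndependent.map'
          (Polynomial.aeval x).toLinearMap
          (LinearMap.ker_eq_bot.2 (transcendental_iff_injective.1 hx'))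
        convert! h1 using 1
        funext i
        simp [Polynomial.aeval_monomial]
      exact h0.comp _ Fin.val_injective
    obtain ⟨A, B, -, -, h⟩ := core ⊥ ⊤ smallProd_bot x bot_le trivial _ hli r s hr hs
      (by simp) (by simp)
    exact ⟨A, B, h⟩

lemma upper {K L : Type*} [Field K] [Field L] [Algebra K L] (r s : ℕ) (hr : 0 < r)
    (hs : 0 < s) (hrL : (r : Cardinal) ≤ Module.rank K L) (hsL : (s : Cardinal) ≤ Module.rank K L)
    (H : IntermediateField K L) (hH : FiniteDimensional K H) :
    ∃ A B : Submodule K L, finrank K A = r ∧ finrank K B = s ∧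
      finrank K ↥(A * B) ≤ (r ⌈/⌉ finrank K H + s ⌈/⌉ finrank K H - 1) * finrank K H := by
  have hh : 0 < finrank K H := finrank_pos
  have bd : ∀ t : ℕ, (t : Cardinal) ≤ Module.rank K L →
      ((t ⌈/⌉ finrank K H : ℕ) : Cardinal) ≤ Module.rank H L := by
    intro t ht
    rcases lt_or_ge (Module.rank H L) Cardinal.aleph0 with hl | hl
    · obtain ⟨n, hn⟩ := Cardinal.lt_aleph0.1 hl
      rw [hn]
      rw [← rank_mul_rank K H L, hn, ← finrank_eq_rank] at ht
      norm_cast at ht ⊢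
      exact (ceilDiv_le_iff_le_mul hh).2 ht
    · exact (Cardinal.natCast_lt_aleph0).le.trans hl
  have pos : ∀ t : ℕ, 0 < t → 0 < t ⌈/⌉ finrank K H := by
    intro t ht
    by_contra! h
    have := (ceilDiv_le_iff_le_mul hh).1 h
    omega
  obtain ⟨A, B, hA, hB, hAB⟩ := smallProd_all (K := H) _ _ (pos r hr) (pos s hs) (bd r hrL) (bd s hsL)
  have fA : FiniteDimensional H A := FiniteDimensional.of_finrank_pos (hA ▸ pos r hr)
  have fB : FiniteDimensional H B := FiniteDimensional.of_finrank_pos (hB ▸ pos s hs)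
  have fAB : FiniteDimensional H ↥(A * B) := finite_mul A B
  have res : ∀ V : Submodule H L, finrank K (V.restrictScalars K) = finrank K H * finrank H V :=
    fun V => (finrank_mul_finrank K H V).symm
  have le : ∀ t : ℕ, t ≤ finrank K H * (t ⌈/⌉ finrank K H) :=
    fun t => (ceilDiv_le_iff_le_mul hh).1 le_rfl
  obtain ⟨A', hA', hAr⟩ := cutDown (A.restrictScalars K) r (by rw [res, hA]; exact le r)
  obtain ⟨B', hB', hBr⟩ := cutDown (B.restrictScalars K) s (by rw [res, hB]; exact le s)
  refine ⟨A', B', hAr, hBr, ?_⟩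
  have hle : A' * B' ≤ (A * B).restrictScalars K := by
    rw [Submodule.mul_le]
    intro x hx y hy
    have hx1 : x ∈ A := (Submodule.restrictScalars_mem K A x).1 (hA' hx)
    have hy1 : y ∈ B := (Submodule.restrictScalars_mem K B y).1 (hB' hy)
    rw [Submodule.restrictScalars_mem]
    exact Submodule.mul_mem_mul hx1 hy1
  have : FiniteDimensional K ((A * B).restrictScalars K) := FiniteDimensional.trans K H ↥(A * B)
  refine (Submodule.finrank_mono hle).trans ?_
  rw [res, mul_comm]
  exact Nat.mul_le_mul_right _ (by omega)

lemma lower {K L : Type*} [Field K] [Field L] [Algebra K L]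
    (hlx : ∀ A B : Submodule K L, A ≠ ⊥ → B ≠ ⊥ →
      FiniteDimensional K A → FiniteDimensional K B →
      (Module.finrank K ↥(A * B) : ℤ) ≥
        (Module.finrank K A : ℤ) + (Module.finrank K B : ℤ)
          - (Module.finrank K ↥(mulStabilizer K L (A * B)) : ℤ))
    (A B : Submodule K L) (hA : 0 < finrank K A) (hB : 0 < finrank K B) :
    ∃ H : IntermediateField K L, FiniteDimensional K H ∧
      (finrank K A ⌈/⌉ finrank K H + finrank K B ⌈/⌉ finrank K H - 1) * finrank K H
        ≤ finrank K ↥(A * B) := by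
  have fA : FiniteDimensional K A := FiniteDimensional.of_finrank_pos hA
  have fB : FiniteDimensional K B := FiniteDimensional.of_finrank_pos hB
  have fAB : FiniteDimensional K ↥(A * B) := finite_mul A B
  have nA : A ≠ ⊥ := by rintro rfl; simp at hA
  have nB : B ≠ ⊥ := by rintro rfl; simp at hB
  obtain ⟨a, ha, ha0⟩ := Submodule.exists_mem_ne_zero_of_ne_bot nA
  obtain ⟨b, hb, hb0⟩ := Submodule.exists_mem_ne_zero_of_ne_bot nB
  have hab : a * b ∈ A * B := Submodule.mul_mem_mul ha hb
  have fS : FiniteDimensional K (mulStabilizer K L (A * B)) := by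
    let f : mulStabilizer K L (A * B) →ₗ[K] ↥(A * B) :=
      { toFun := fun x => ⟨x * (a * b), x.2 _ hab⟩
        map_add' := fun x y => Subtype.ext (by simp [add_mul])
        map_smul' := fun c x => Subtype.ext (by simp) }
    refine FiniteDimensional.of_injective f ?_
    intro x y hxy
    have h : (x : L) * (a * b) = y * (a * b) := congrArg Subtype.val hxy
    exact Subtype.ext (mul_right_cancel₀ (mul_ne_zero ha0 hb0) h)
  let S : Subalgebra K L :=
    { mulStabilizer K L (A * B) with
      mul_mem' := by
        intro x y hx hy v hv
        rw [mul_assoc]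
        exact hx _ (hy _ hv)
      algebraMap_mem' := by
        intro c v hv
        rw [← Algebra.smul_def]
        exact (A * B).smul_mem c hv }
  have fS' : FiniteDimensional K S := fS
  have hSf : IsField S := isField_of_isIntegral_of_isField' (R := K) (Field.toIsField K)
  let H : IntermediateField K L := S.toIntermediateField' hSf
  have fH : FiniteDimensional K H := fS
  have hh : 0 < finrank K H := finrank_pos
  have hHS : finrank K H = finrank K (mulStabilizer K L (A * B)) := rfl
  let T : Submodule K L := mulStabilizer K L (A * B)
  have hTT : T * T ≤ T := by
    rw [Submodule.mul_le]
    exact fun x hx y hy => S.mul_mem hx hy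
  have h1T : (1 : L) ∈ T := S.one_mem
  have hTAB : T * (A * B) ≤ A * B := by
    rw [Submodule.mul_le]
    exact fun x hx y hy => hx y hy
  have hle : ∀ V : Submodule K L, V ≤ T * V := by
    intro V x hx
    rw [← one_mul x]
    exact Submodule.mul_mem_mul h1T hx
  have hmul : (T * A) * (T * B) = A * B := by
    apply le_antisymm
    · calc (T * A) * (T * B) = (T * T) * (A * B) := by
            rw [mul_mul_mul_comm]
        _ ≤ T * (A * B) := mul_le_mul_left hTT _
        _ ≤ A * B := hTAB
    · exact mul_le_mul' (hle A) (hle B)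
  have hdvd : ∀ V : Submodule K L, finrank K H ∣ finrank K ↥(T * V) := by
    intro V
    let W : Submodule H L :=
      { (T * V) with
        smul_mem' := by
          intro c x hx
          have : (c : L) * x ∈ T * (T * V) := Submodule.mul_mem_mul c.2 hx
          rw [← mul_assoc] at this
          exact mul_le_mul_left hTT V this }
    exact ⟨finrank H W, (finrank_mul_finrank K H W).symm⟩
  have fT : FiniteDimensional K T := fS
  have fTA : FiniteDimensional K ↥(T * A) := finite_mul T A
  have fTB : FiniteDimensional K ↥(T * B) := finite_mul T B
  have key := hlx (T * A) (T * B) (fun h => nA (le_bot_iff.1 (h ▸ hle A)))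
    (fun h => nB (le_bot_iff.1 (h ▸ hle B))) fTA fTB
  rw [hmul, ← hHS] at key
  obtain ⟨m, hm⟩ := hdvd A
  obtain ⟨n, hn⟩ := hdvd B
  have h1 : finrank K A ≤ finrank K H * m := hm ▸ Submodule.finrank_mono (hle A)
  have h2 : finrank K B ≤ finrank K H * n := hn ▸ Submodule.finrank_mono (hle B)
  refine ⟨H, fH, ?_⟩
  have h3 := (ceilDiv_le_iff_le_mul hh).2 h1
  have h4 := (ceilDiv_le_iff_le_mul hh).2 h2
  calc _ ≤ (m + n - 1) * finrank K H := Nat.mul_le_mul_right _ (by omega)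
    _ = finrank K H * m + finrank K H * n - finrank K H := by
      rw [Nat.sub_mul, add_mul, one_mul, mul_comm m, mul_comm n]
    _ ≤ _ := by
      rw [hm, hn] at key
      omega

/-- Section 8: if the extension `K ⊆ L` satisfies the conclusion of the Hou–Leung–Xiang
theorem (Conjecture 8.1 of Hou), then `μ_{K,L}(r,s) = κ_{K,L}(r,s)` for all positive
`r, s ≤ dim_K L`. -/
theorem stmt_14 (K L : Type*) [Field K] [Field L] [Algebra K L]
    (hlx : ∀ A B : Submodule K L, A ≠ ⊥ → B ≠ ⊥ →
      FiniteDimensional K A → FiniteDimensional K B →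
      (Module.finrank K ↥(A * B) : ℤ) ≥
        (Module.finrank K A : ℤ) + (Module.finrank K B : ℤ)
          - (Module.finrank K ↥(mulStabilizer K L (A * B)) : ℤ))
    (r s : ℕ) (hr : 0 < r) (hs : 0 < s)
    (hrL : (r : Cardinal) ≤ Module.rank K L) (hsL : (s : Cardinal) ≤ Module.rank K L) :
    sInf {n : ℕ | ∃ A B : Submodule K L,
        Module.finrank K A = r ∧ Module.finrank K B = s ∧ Module.finrank K ↥(A * B) = n}
      = sInf {n : ℕ | ∃ H : IntermediateField K L, FiniteDimensional K H ∧
          n = (r ⌈/⌉ Module.finrank K ↥H + s ⌈/⌉ Module.finrank K ↥H - 1)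
                * Module.finrank K ↥H} := by
  have lowers : ∀ m ∈ {n : ℕ | ∃ A B : Submodule K L,
        Module.finrank K A = r ∧ Module.finrank K B = s ∧ Module.finrank K ↥(A * B) = n},
      ∃ k ∈ {n : ℕ | ∃ H : IntermediateField K L, FiniteDimensional K H ∧
          n = (r ⌈/⌉ Module.finrank K ↥H + s ⌈/⌉ Module.finrank K ↥H - 1)
                * Module.finrank K ↥H}, k ≤ m := by
    rintro m ⟨A, B, hA, hB, rfl⟩
    obtain ⟨H, hH, h⟩ := lower hlx A B (by omega) (by omega)
    rw [hA, hB] at h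
    exact ⟨_, ⟨H, hH, rfl⟩, h⟩
  have uppers : ∀ m ∈ {n : ℕ | ∃ H : IntermediateField K L, FiniteDimensional K H ∧
          n = (r ⌈/⌉ Module.finrank K ↥H + s ⌈/⌉ Module.finrank K ↥H - 1)
                * Module.finrank K ↥H},
      ∃ k ∈ {n : ℕ | ∃ A B : Submodule K L,
        Module.finrank K A = r ∧ Module.finrank K B = s ∧ Module.finrank K ↥(A * B) = n},
        k ≤ m := by
    rintro m ⟨H, hH, rfl⟩
    obtain ⟨A, B, hA, hB, h⟩ := upper r s hr hs hrL hsL H hH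
    exact ⟨_, ⟨A, B, hA, hB, rfl⟩, h⟩
  have ne2 : {n : ℕ | ∃ H : IntermediateField K L, FiniteDimensional K H ∧
          n = (r ⌈/⌉ Module.finrank K ↥H + s ⌈/⌉ Module.finrank K ↥H - 1)
                * Module.finrank K ↥H}.Nonempty := ⟨_, ⊥, inferInstance, rfl⟩
  have ne1 : {n : ℕ | ∃ A B : Submodule K L,
        Module.finrank K A = r ∧ Module.finrank K B = s ∧
          Module.finrank K ↥(A * B) = n}.Nonempty := by
    obtain ⟨m, hm⟩ := ne2
    obtain ⟨k, hk, -⟩ := uppers m hm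
    exact ⟨k, hk⟩
  apply le_antisymm
  · obtain ⟨k, hk, hle⟩ := uppers _ (Nat.sInf_mem ne2)
    exact (Nat.sInf_le hk).trans hle
  · obtain ⟨k, hk, hle⟩ := lowers _ (Nat.sInf_mem ne1)
    exact (Nat.sInf_le hk).trans hle
end

section
/- Let K ⊆ L be a commutative field extension and let V be a nonzero finite-dimensional K-subspace of L. Then the stabilizer H = {x ∈ L : xV ⊆ V} is a subfield of L containing K, and it satisfies ⟨HV⟩ = V, where ⟨HV⟩ is the K-span of {hv : h ∈ H, v ∈ V}. -/
open scoped Pointwise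

/-- For a nonzero finite-dimensional `K`-subspace `V` of `L`, the stabilizer
`H = {x ∈ L : x·V ⊆ V}` is a subfield of `L` containing `K`, and the `K`-span of the
product set `HV` equals `V`. -/
theorem stmt_15 (K L : Type*) [Field K] [Field L] [Algebra K L]
    (V : Submodule K L) (hV : V ≠ ⊥) (hVfin : FiniteDimensional K V) :
    (∃ F : Subfield L, (F : Set L) = {x : L | ∀ v ∈ V, x * v ∈ V} ∧
        Set.range (algebraMap K L) ⊆ (F : Set L)) ∧
      Submodule.span K ({x : L | ∀ v ∈ V, x * v ∈ V} * (V : Set L)) = V := by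
  refine ⟨⟨{ carrier := {x : L | ∀ v ∈ V, x * v ∈ V}
             mul_mem' := ?_
             one_mem' := ?_
             add_mem' := ?_
             zero_mem' := ?_
             neg_mem' := ?_
             inv_mem' := ?_ }, rfl, ?_⟩, ?_⟩
  · intro a b ha hb v hv
    rw [mul_assoc]
    exact ha _ (hb v hv)
  · intro v hv
    rwa [one_mul]
  · intro a b ha hb v hv
    rw [add_mul]
    exact V.add_mem (ha v hv) (hb v hv)
  · intro v hv
    rw [zero_mul]
    exact V.zero_mem
  · intro a ha v hv
    rw [neg_mul]
    exact V.neg_mem (ha v hv)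
  · intro x hx v hv
    by_cases h0 : x = 0
    · rw [h0, inv_zero, zero_mul]
      exact V.zero_mem
    · let f : V →ₗ[K] V := (LinearMap.mulLeft K x).restrict hx
      have hf : Function.Injective f := by
        intro a b hab
        have h1 : x * (a : L) = x * (b : L) := congrArg Subtype.val hab
        exact Subtype.ext (mul_left_cancel₀ h0 h1)
      obtain ⟨w, hw⟩ := (LinearMap.injective_iff_surjective.mp hf) ⟨v, hv⟩
      have h2 : x * (w : L) = v := congrArg Subtype.val hw
      rw [← h2, inv_mul_cancel_left₀ h0]
      exact w.2
  · rintro _ ⟨k, rfl⟩ v hv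
    rw [← Algebra.smul_def]
    exact V.smul_mem k hv
  · apply le_antisymm
    · rw [Submodule.span_le]
      rintro _ ⟨h, hh, v, hv, rfl⟩
      exact hh v hv
    · intro v hv
      apply Submodule.subset_span
      exact ⟨1, fun w hw => by rwa [one_mul], v, hv, one_mul v⟩
end

section
/- Let K ⊆ L be a commutative field extension with K of characteristic 0, and let r, s be positive integers with r, s ≤ dim_K L. Then the minimum of dim_K⟨AB⟩, taken over all K-subspaces A, B of L with dim_K A = r and dim_K B = s, equals the minimum of (⌈r/h⌉ + ⌈s/h⌉ − 1)·h, taken over all h = [H:K] where H ranges over the finite-dimensional intermediate fields K ⊆ H ⊆ L. -/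
section helpers
variable {K L : Type*} [Field K] [Field L] [Algebra K L]

theorem exists_ne_zero_of_fr {A : Submodule K L} (hA : A ≠ ⊥) : ∃ a ∈ A, a ≠ 0 :=
  (Submodule.ne_bot_iff A).1 hA

/-- the stabilizer of a finite-dimensional subspace, as an intermediate field -/
def stabField (A : Submodule K L) [FiniteDimensional K A] : IntermediateField K L :=
  Subalgebra.toIntermediateField
    { carrier := {x | ∀ a ∈ A, x * a ∈ A}
      mul_mem' := fun {x y} hx hy a ha => by
        rw [mul_assoc]; exact hx _ (hy _ ha)
      add_mem' := fun {x y} hx hy a ha => by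
        rw [add_mul]; exact A.add_mem (hx _ ha) (hy _ ha)
      algebraMap_mem' := fun k a ha => by
        rw [← Algebra.smul_def]; exact A.smul_mem _ ha }
    (by
      intro x hx a ha
      by_cases h0 : x = 0
      · subst h0; simp
      let f : A →ₗ[K] A := (LinearMap.mulLeft K x).restrict (fun a ha => hx a ha)
      have hinj : Function.Injective f := by
        intro u v huv
        have : x * (u : L) = x * v := congrArg Subtype.val huv
        exact Subtype.ext (mul_left_cancel₀ h0 this)
      obtain ⟨b, hb⟩ := (LinearMap.injective_iff_surjective.1 hinj) ⟨a, ha⟩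
      have hb' : x * (b : L) = a := congrArg Subtype.val hb
      rw [← hb', inv_mul_cancel_left₀ h0]
      exact b.2)

theorem mem_stabField {A : Submodule K L} [FiniteDimensional K A] {x : L} :
    x ∈ stabField A ↔ ∀ a ∈ A, x * a ∈ A := Iff.rfl

theorem finiteDimensional_of_mul_mem (H : IntermediateField K L) (A : Submodule K L)
    [FiniteDimensional K A] {c : L} (hc : c ≠ 0) (h : ∀ x ∈ H, x * c ∈ A) :
    FiniteDimensional K H := by
  let f : H →ₗ[K] A := LinearMap.codRestrict A
    ((LinearMap.mulRight K c).comp H.val.toLinearMap) (fun x => h x x.2)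
  refine FiniteDimensional.of_injective f ?_
  intro u v huv
  have : (u : L) * c = v * c := congrArg Subtype.val huv
  exact Subtype.ext (mul_right_cancel₀ hc this)

theorem finrank_map_mulLeft {e : L} (he : e ≠ 0) (B : Submodule K L) :
    Module.finrank K (B.map (LinearMap.mulLeft K e)) = Module.finrank K B :=
  (Submodule.equivMapOfInjective (LinearMap.mulLeft K e) (fun _ _ h => mul_left_cancel₀ he h) B).finrank_eq.symm

theorem dyson (n : ℕ) : ∀ (A B : Submodule K L) [FiniteDimensional K A] [FiniteDimensional K B],
    A ≠ ⊥ → (1 : L) ∈ B → Module.finrank K B = n →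
    ∃ (C : Submodule K L) (H : IntermediateField K L), FiniteDimensional K H ∧
      A ≤ C ∧ C ≤ A * B ∧ (∀ x ∈ H, ∀ c ∈ C, x * c ∈ C) ∧
      Module.finrank K A + Module.finrank K B ≤ Module.finrank K C + Module.finrank K H := by
  induction n using Nat.strong_induction_on with
  | _ n ih =>
  intro A B _ _ hA h1 hn
  by_cases hst : ∀ e ∈ A, ∀ b ∈ B, e * b ∈ A
  · obtain ⟨a, ha, ha0⟩ := exists_ne_zero_of_fr hA
    have hfd : FiniteDimensional K (stabField A) :=
      finiteDimensional_of_mul_mem _ A ha0 (fun x hx => hx a ha)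
    refine ⟨A, stabField A, hfd, le_rfl, ?_, fun x hx => hx, ?_⟩
    · intro x hx
      simpa using Submodule.mul_mem_mul hx h1
    · have hle : B ≤ Subalgebra.toSubmodule (stabField A).toSubalgebra := by
        intro b hb a ha
        rw [mul_comm]; exact hst a ha b hb
      have : FiniteDimensional K (Subalgebra.toSubmodule (stabField A).toSubalgebra) := hfd
      have := Submodule.finrank_mono hle
      exact Nat.add_le_add_left this _
  · push Not at hst
    obtain ⟨e, he, b, hb, heb⟩ := hst
    have he0 : e ≠ 0 := by rintro rfl; simp at heb
    let A' := A ⊔ B.map (LinearMap.mulLeft K e)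
    let B' := B ⊓ A.comap (LinearMap.mulLeft K e)
    have hlt : Module.finrank K B' < n := by
      rw [← hn]
      apply Submodule.finrank_lt_finrank_of_lt
      refine lt_of_le_of_ne inf_le_left ?_
      intro h
      have : b ∈ B' := h ▸ hb
      exact heb this.2
    have h1' : (1 : L) ∈ B' := ⟨h1, by simpa using he⟩
    have hA' : A' ≠ ⊥ := fun h => hA (le_bot_iff.1 (h ▸ le_sup_left))
    have hB'fd : FiniteDimensional K B' := Submodule.finiteDimensional_of_le (inf_le_left : B' ≤ B)
    have hA'fd : FiniteDimensional K A' := Submodule.finiteDimensional_sup _ _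
    obtain ⟨C, H, hH, hAC, hCAB, hHC, hdim⟩ := ih _ hlt A' B' hA' h1' rfl
    refine ⟨C, H, hH, le_sup_left.trans hAC, hCAB.trans ?_, hHC, ?_⟩
    · rw [Submodule.mul_le]
      intro x hx y hy
      obtain ⟨u, hu, v, hv, rfl⟩ := Submodule.mem_sup.1 hx
      obtain ⟨w, hw, rfl⟩ := hv
      rw [add_mul]
      refine Submodule.add_mem _ (Submodule.mul_mem_mul hu hy.1) ?_
      have h2 : e * y ∈ A := hy.2
      have := Submodule.mul_mem_mul h2 hw
      simp only [LinearMap.mulLeft_apply]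
      convert this using 1; ring
    · have hmap : B'.map (LinearMap.mulLeft K e) = A ⊓ B.map (LinearMap.mulLeft K e) := by
        ext x
        constructor
        · rintro ⟨y, hy, rfl⟩
          exact ⟨hy.2, y, hy.1, rfl⟩
        · rintro ⟨hx, y, hy, rfl⟩
          exact ⟨y, ⟨hy, hx⟩, rfl⟩
      have h3 := finrank_map_mulLeft he0 B'
      have h4 := finrank_map_mulLeft he0 B
      have h5 := Submodule.finrank_sup_add_finrank_inf_eq A (B.map (LinearMap.mulLeft K e))
      rw [← hmap] at h5
      have h6 : Module.finrank K A' = Module.finrank K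
        ↥(A ⊔ B.map (LinearMap.mulLeft K e)) := rfl
      omega

theorem finite_fields [CharZero K] (W : Submodule K L) [FiniteDimensional K W] :
    {H : IntermediateField K L | FiniteDimensional K H ∧
      ∃ w ∈ W, w ≠ 0 ∧ ∀ x ∈ H, x * w ∈ W}.Finite := by
  classical
  let E := algebraicClosure K L
  let bas := Module.Basis.ofVectorSpace E L
  obtain ⟨S, hS⟩ := (Submodule.fg_iff_finiteDimensional W).2 inferInstance
  let T : Set L := ⋃ s ∈ (S : Set L), (fun i => ((bas.repr s i : E) : L)) '' ((bas.repr s).support : Set _)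
  have hT : T.Finite := S.finite_toSet.biUnion (fun s _ => (Finset.finite_toSet _).image _)
  have : Finite T := hT
  let F := IntermediateField.adjoin K T
  have hF : FiniteDimensional K F := by
    apply IntermediateField.finiteDimensional_adjoin
    intro x hx
    simp only [T, Set.mem_iUnion] at hx
    obtain ⟨s, _, i, _, rfl⟩ := hx
    exact (mem_algebraicClosure_iff.1 (bas.repr s i).2).isIntegral
  have hco : ∀ w ∈ W, ∀ i, ((bas.repr w i : E) : L) ∈ F := by
    intro w hw i
    rw [← hS] at hw
    induction hw using Submodule.span_induction with
    | mem s hs =>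
      by_cases h : bas.repr s i = 0
      · rw [h]; exact F.zero_mem
      · apply IntermediateField.subset_adjoin
        simp only [T, Set.mem_iUnion]
        exact ⟨s, hs, i, by simpa using h, rfl⟩
    | zero => simp
    | add x y _ _ hx hy => 
      rw [map_add]; exact F.add_mem hx hy
    | smul k x _ hx =>
      have : k • x = (algebraMap K E k) • x := by rw [algebraMap_smul]
      rw [this, map_smul]
      exact F.mul_mem (F.algebraMap_mem k) hx
  have hfin : Finite (IntermediateField K F) := 
    Field.finite_intermediateField_of_exists_primitive_element K F (Field.exists_primitive_element K F)
  refine (Set.finite_range (IntermediateField.lift (K := K) (F := F))).subset ?_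
  rintro H ⟨hH, w, hw, hw0, hx⟩
  have hle : H ≤ F := by
    intro x hxH
    have hxE : x ∈ E := mem_algebraicClosure_iff.2 (by
      have := Algebra.IsAlgebraic.isAlgebraic (R := K) (⟨x, hxH⟩ : H)
      exact this.algebraMap (A := L))
    have : bas.repr w ≠ 0 := by simpa using hw0
    obtain ⟨i, hi⟩ := Finsupp.ne_iff.1 this
    have h1 := hco w hw i
    have h2 := hco _ (hx x hxH) i
    have h3 : x * w = (⟨x, hxE⟩ : E) • w := rfl
    rw [h3, map_smul] at h2
    have h4 : x * ((bas.repr w i : E) : L) ∈ F := h2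
    have h5 : ((bas.repr w i : E) : L) ≠ 0 := by simpa using hi
    have := F.mul_mem h4 (F.inv_mem h1)
    rwa [mul_inv_cancel_right₀ h5] at this
  exact ⟨IntermediateField.restrict hle, IntermediateField.lift_restrict hle⟩

theorem exists_curve [CharZero K] (B : Submodule K L) [FiniteDimensional K B] (hB : B ≠ ⊥) :
    ∃ b : ℕ → L, (∀ t, b t ∈ B ∧ b t ≠ 0) ∧ ∀ S : Set ℕ, S.Infinite →
      ∀ P : Submodule K B, (∀ t ∈ S, ∀ h : b t ∈ B, (⟨b t, h⟩ : B) ∈ P) → P = ⊤ := by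
  let e := Module.finBasis K B
  have hpos : 0 < Module.finrank K B := by
    rw [Module.finrank_pos_iff]
    exact Submodule.nontrivial_iff_ne_bot.2 hB
  let β : ℕ → B := fun t => ∑ i : Fin (Module.finrank K B), ((t : K) ^ (i : ℕ)) • e i
  refine ⟨fun t => β t, fun t => ⟨(β t).2, ?_⟩, ?_⟩
  · intro h
    have h' : β t = 0 := Subtype.ext h
    have := Fintype.linearIndependent_iff.1 e.linearIndependent _ h' ⟨0, hpos⟩
    simp at this
  · intro S hS P hP
    by_contra hne
    obtain ⟨f, hf, hPf⟩ := Submodule.exists_le_ker_of_lt_top P (lt_top_iff_ne_top.2 hne)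
    let p : Polynomial K := ∑ i : Fin (Module.finrank K B), Polynomial.C (f (e i)) * Polynomial.X ^ (i : ℕ)
    have hp : p = 0 := by
      apply Polynomial.eq_zero_of_infinite_isRoot
      refine (hS.image (f := fun t : ℕ => (t : K)) (Nat.cast_injective.injOn)).mono ?_
      rintro _ ⟨t, ht, rfl⟩
      have := hPf (hP t ht (β t).2)
      rw [LinearMap.mem_ker] at this
      have h2 : f (β t) = 0 := this
      simp only [β, map_sum, map_smul, smul_eq_mul] at h2
      simp only [Set.mem_ofPred_eq, Polynomial.IsRoot, p, Polynomial.eval_finsetSum, Polynomial.eval_mul, Polynomial.eval_C, Polynomial.eval_pow, Polynomial.eval_X]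
      rw [← h2]
      exact Finset.sum_congr rfl fun i _ => mul_comm _ _
    apply hf
    refine e.ext fun i => ?_
    have := congrArg (fun q => Polynomial.coeff q (i : ℕ)) hp
    simp only [p, Polynomial.finsetSum_coeff, Polynomial.coeff_C_mul, Polynomial.coeff_X_pow, Polynomial.coeff_zero] at this
    rw [Finset.sum_eq_single i] at this
    · simpa using this
    · intro j _ hj
      simp [Fin.val_inj, Ne.symm hj]
    · simp

theorem finiteDimensional_mul' (A B : Submodule K L) [FiniteDimensional K A]
    [FiniteDimensional K B] : FiniteDimensional K ↥(A * B) :=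
  (Submodule.fg_iff_finiteDimensional _).1
    (Submodule.FG.mul ((Submodule.fg_iff_finiteDimensional A).2 inferInstance)
      ((Submodule.fg_iff_finiteDimensional B).2 inferInstance))

theorem kneser_weak [CharZero K] (A B : Submodule K L) [FiniteDimensional K A]
    [FiniteDimensional K B] (hA : A ≠ ⊥) (hB : B ≠ ⊥) :
    ∃ H : IntermediateField K L, FiniteDimensional K H ∧ (∀ x ∈ H, ∀ c ∈ A * B, x * c ∈ A * B) ∧
      Module.finrank K A + Module.finrank K B ≤
        Module.finrank K ↥(A * B) + Module.finrank K H := by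
  have hABfd : FiniteDimensional K ↥(A * B) :=
    finiteDimensional_mul' A B
  obtain ⟨b, hb, hcurve⟩ := exists_curve B hB
  have key : ∀ t, ∃ (C : Submodule K L) (H : IntermediateField K L), FiniteDimensional K H ∧
      (∀ a ∈ A, b t * a ∈ C) ∧ C ≤ A * B ∧ (∀ x ∈ H, ∀ c ∈ C, x * c ∈ C) ∧
      Module.finrank K A + Module.finrank K B ≤ Module.finrank K C + Module.finrank K H := by
    intro t
    obtain ⟨hbt, hb0⟩ := hb t
    have h1 : (1 : L) ∈ B.map (LinearMap.mulLeft K (b t)⁻¹) :=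
      ⟨b t, hbt, by simp [hb0]⟩
    obtain ⟨C, H, hH, hAC, hC, hst, hd⟩ :=
      dyson _ A (B.map (LinearMap.mulLeft K (b t)⁻¹)) hA h1 rfl
    refine ⟨C.map (LinearMap.mulLeft K (b t)), H, hH, fun a ha => ⟨a, hAC ha, rfl⟩, ?_, ?_, ?_⟩
    · rintro _ ⟨c, hc, rfl⟩
      have : A * B.map (LinearMap.mulLeft K (b t)⁻¹) ≤
          (A * B).comap (LinearMap.mulLeft K (b t)) := by
        rw [Submodule.mul_le]
        rintro x hx _ ⟨y, hy, rfl⟩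
        have := Submodule.mul_mem_mul hx hy
        simp only [Submodule.mem_comap, LinearMap.mulLeft_apply]
        convert this using 1
        field_simp
      exact this (hC hc)
    · rintro x hx _ ⟨c, hc, rfl⟩
      exact ⟨x * c, hst x hx c hc, by simp; ring⟩
    · rw [finrank_map_mulLeft hb0]
      rwa [finrank_map_mulLeft (inv_ne_zero hb0)] at hd
  choose C H hH hbC hCAB hst hd using key
  obtain ⟨a₀, ha₀, ha₀0⟩ := exists_ne_zero_of_fr hA
  have hmem : ∀ t, H t ∈ {H : IntermediateField K L | FiniteDimensional K H ∧
      ∃ w ∈ A * B, w ≠ 0 ∧ ∀ x ∈ H, x * w ∈ A * B} := fun t =>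
    ⟨hH t, b t * a₀, hCAB t (hbC t _ ha₀), mul_ne_zero (hb t).2 ha₀0,
      fun x hx => hCAB t (hst t x hx _ (hbC t _ ha₀))⟩
  have : Finite {H : IntermediateField K L | FiniteDimensional K H ∧
      ∃ w ∈ A * B, w ≠ 0 ∧ ∀ x ∈ H, x * w ∈ A * B} := finite_fields (A * B)
  obtain ⟨H₀, hinf⟩ := Finite.exists_infinite_fiber
    (fun t : ℕ => (⟨H t, hmem t⟩ : {H : IntermediateField K L | FiniteDimensional K H ∧
      ∃ w ∈ A * B, w ≠ 0 ∧ ∀ x ∈ H, x * w ∈ A * B}))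
  have hS := Set.infinite_coe_iff.1 hinf
  have hSe : ∀ t ∈ ((fun t : ℕ => (⟨H t, hmem t⟩ : {H : IntermediateField K L | FiniteDimensional K H ∧
      ∃ w ∈ A * B, w ≠ 0 ∧ ∀ x ∈ H, x * w ∈ A * B})) ⁻¹' {H₀}), H t = H₀.1 := by
    intro t ht
    exact congrArg Subtype.val ht
  obtain ⟨t₀, ht₀⟩ := hS.nonempty
  refine ⟨H₀.1, H₀.2.1, ?_, ?_⟩
  · intro x hx
    have : A * B ≤ (A * B).comap (LinearMap.mulLeft K x) := by
      rw [Submodule.mul_le]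
      intro a ha y hy
      have := hcurve _ hS (((A * B).comap (LinearMap.mulLeft K (x * a))).comap B.subtype) ?_
      · have h2 : (⟨y, hy⟩ : B) ∈ ((A * B).comap (LinearMap.mulLeft K (x * a))).comap B.subtype :=
          this ▸ Submodule.mem_top
        have h3 : x * a * y ∈ A * B := h2
        simpa [mul_assoc] using h3
      · intro t ht h
        have h1 := hCAB t (hst t x (by rw [hSe t ht]; exact hx) _ (hbC t _ ha))
        simp only [Submodule.mem_comap, LinearMap.mulLeft_apply, Submodule.subtype_apply]
        convert h1 using 1; ring
    exact this
  · have h1 := hd t₀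
    have h2 := Submodule.finrank_mono (hCAB t₀)
    rw [hSe t₀ ht₀] at h1
    omega


theorem lower_bound [CharZero K] (A B : Submodule K L) (r s : ℕ) (hr : 0 < r) (hs : 0 < s)
    (hA : Module.finrank K A = r) (hB : Module.finrank K B = s) :
    ∃ H : IntermediateField K L, FiniteDimensional K H ∧
      (r ⌈/⌉ Module.finrank K H + s ⌈/⌉ Module.finrank K H - 1) * Module.finrank K H
        ≤ Module.finrank K ↥(A * B) := by
  have hAfd : FiniteDimensional K A := FiniteDimensional.of_finrank_pos (by omega)
  have hBfd : FiniteDimensional K B := FiniteDimensional.of_finrank_pos (by omega)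
  have hA0 : A ≠ ⊥ := by rintro rfl; simp at hA; omega
  have hB0 : B ≠ ⊥ := by rintro rfl; simp at hB; omega
  have hABfd : FiniteDimensional K ↥(A * B) := finiteDimensional_mul' A B
  obtain ⟨a, ha, ha0⟩ := exists_ne_zero_of_fr hA0
  obtain ⟨b, hb, hb0⟩ := exists_ne_zero_of_fr hB0
  obtain ⟨H, hHdef⟩ : ∃ H, H = stabField (A * B) := ⟨_, rfl⟩
  have hHm : ∀ x, x ∈ H ↔ ∀ c ∈ A * B, x * c ∈ A * B := by
    intro x; rw [hHdef]; exact mem_stabField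
  have hH : FiniteDimensional K H := finiteDimensional_of_mul_mem H (A * B) (mul_ne_zero ha0 hb0)
    (fun x hx => (hHm x).1 hx _ (Submodule.mul_mem_mul ha hb))
  refine ⟨H, hH, ?_⟩
  have aux : ∀ D : Submodule K L, FiniteDimensional K D → D ≠ ⊥ →
      ∃ (D' : Submodule K L) (d : ℕ), FiniteDimensional K D' ∧ D' ≠ ⊥ ∧
        D' = Subalgebra.toSubmodule H.toSubalgebra * D ∧
        Module.finrank K D' = Module.finrank K H * d ∧
        (Module.finrank K D) ⌈/⌉ Module.finrank K H ≤ d := by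
    intro D hD hD0
    have hle : D ≤ Subalgebra.toSubmodule H.toSubalgebra * D := by
      intro x hx
      have : (1 : L) ∈ Subalgebra.toSubmodule H.toSubalgebra := H.one_mem
      simpa using Submodule.mul_mem_mul this hx
    have hHfd : FiniteDimensional K (Subalgebra.toSubmodule H.toSubalgebra) := hH
    have hfd : FiniteDimensional K ↥(Subalgebra.toSubmodule H.toSubalgebra * D) :=
      finiteDimensional_mul' _ _
    let M : Submodule H L :=
      { carrier := (Subalgebra.toSubmodule H.toSubalgebra * D : Submodule K L)
        add_mem' := fun hx hy => Submodule.add_mem _ hx hy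
        zero_mem' := Submodule.zero_mem _
        smul_mem' := by
          intro c x hx
          have h2 : Subalgebra.toSubmodule H.toSubalgebra * D ≤
              (Subalgebra.toSubmodule H.toSubalgebra * D).comap (LinearMap.mulLeft K (c : L)) := by
            rw [Submodule.mul_le]
            intro y hy z hz
            have h3 : (c : L) * y ∈ Subalgebra.toSubmodule H.toSubalgebra := H.mul_mem c.2 hy
            have := Submodule.mul_mem_mul h3 hz
            simpa [mul_assoc] using this
          exact h2 hx }
    have hM : Module.finrank K M =
        Module.finrank K ↥(Subalgebra.toSubmodule H.toSubalgebra * D) := rfl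
    have hmul : Module.finrank K H * Module.finrank H M = Module.finrank K M :=
      Module.finrank_mul_finrank K H M
    refine ⟨_, Module.finrank H M, hfd, ?_, rfl, ?_, ?_⟩
    · intro h; exact hD0 (le_bot_iff.1 (h ▸ hle))
    · rw [← hM, hmul]
    · rw [ceilDiv_le_iff_le_smul Module.finrank_pos, smul_eq_mul, hmul, hM]
      exact Submodule.finrank_mono hle
  obtain ⟨A', p, hA'fd, hA'0, hA', hpA, hp⟩ := aux A hAfd hA0
  obtain ⟨B', q, hB'fd, hB'0, hB', hqB, hq⟩ := aux B hBfd hB0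
  have hprod : A' * B' = A * B := by
    apply le_antisymm
    · have hst : Subalgebra.toSubmodule H.toSubalgebra * (A * B) ≤ A * B := by
        rw [Submodule.mul_le]
        intro x hx c hc
        exact (hHm x).1 hx c hc
      rw [hA', hB']
      calc _ = Subalgebra.toSubmodule H.toSubalgebra *
            (Subalgebra.toSubmodule H.toSubalgebra * (A * B)) := by ring
        _ ≤ Subalgebra.toSubmodule H.toSubalgebra * (A * B) := mul_le_mul' le_rfl hst
        _ ≤ _ := hst
    · have h1 : (1 : Submodule K L) ≤ Subalgebra.toSubmodule H.toSubalgebra := by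
        rw [Submodule.one_le]; exact H.one_mem
      rw [hA', hB']
      calc A * B = (1 * A) * (1 * B) := by simp
        _ ≤ _ := mul_le_mul' (mul_le_mul' h1 le_rfl)
            (mul_le_mul' h1 le_rfl)
  obtain ⟨H₁, hH₁, hst, hd⟩ := kneser_weak A' B' hA'0 hB'0
  rw [hprod] at hst hd
  have hle : H₁ ≤ H := fun x hx => (hHm x).2 (hst x hx)
  have hle' : Module.finrank K H₁ ≤ Module.finrank K H := by
    have hHfd : FiniteDimensional K (Subalgebra.toSubmodule H.toSubalgebra) := hH
    exact Submodule.finrank_mono (s := Subalgebra.toSubmodule H₁.toSubalgebra)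
      (t := Subalgebra.toSubmodule H.toSubalgebra) hle
  rw [hpA, hqB] at hd
  rw [hA] at hp
  rw [hB] at hq
  rw [Nat.sub_mul, one_mul, Nat.sub_le_iff_le_add]
  calc _ ≤ (p + q) * Module.finrank K H := Nat.mul_le_mul_right _ (Nat.add_le_add hp hq)
    _ = Module.finrank K H * p + Module.finrank K H * q := by ring
    _ ≤ _ := hd
    _ ≤ _ := Nat.add_le_add_left hle' _

theorem exists_pow_li [CharZero K] (m : ℕ) (hm : (m : Cardinal) ≤ Module.rank K L) :
    ∃ x : L, LinearIndependent K (fun i : Fin m => x ^ (i : ℕ)) := by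
  by_cases h : ∃ x : L, Transcendental K x
  · obtain ⟨x, hx⟩ := h
    refine ⟨x, ?_⟩
    rw [Fintype.linearIndependent_iff]
    intro g hg i
    have hp : (∑ i : Fin m, Polynomial.C (g i) * Polynomial.X ^ (i : ℕ) : Polynomial K) = 0 := by
      by_contra hne
      apply hx
      refine ⟨_, hne, ?_⟩
      rw [← hg]
      simp [Algebra.smul_def]
    have := congrArg (fun q => Polynomial.coeff q (i : ℕ)) hp
    simp only [Polynomial.finsetSum_coeff, Polynomial.coeff_C_mul, Polynomial.coeff_X_pow,
      Polynomial.coeff_zero] at this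
    rw [Finset.sum_eq_single i] at this
    · simpa using this
    · intro j _ hj
      simp [Fin.val_inj, Ne.symm hj]
    · simp
  · have halg : ∀ x : L, IsAlgebraic K x := by
      intro x; by_contra hx; exact h ⟨x, hx⟩
    obtain ⟨s, hs, hli⟩ := exists_finset_linearIndependent_of_le_rank hm
    let E := IntermediateField.adjoin K (s : Set L)
    have hE : FiniteDimensional K E :=
      IntermediateField.finiteDimensional_adjoin fun x _ => (halg x).isIntegral
    have hsE : Submodule.span K (s : Set L) ≤ Subalgebra.toSubmodule E.toSubalgebra :=
      Submodule.span_le.2 (IntermediateField.subset_adjoin K _)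
    have hEfd : FiniteDimensional K (Subalgebra.toSubmodule E.toSubalgebra) := hE
    have h1 := Submodule.finrank_mono hsE
    have h2 : Module.finrank K (Submodule.span K (s : Set L)) = m := by
      rw [← hs]; exact finrank_span_finset_eq_card hli
    have h3 : m ≤ Module.finrank K E := by rw [← h2]; exact h1
    obtain ⟨α, hα⟩ := Field.exists_primitive_element K E
    have h4 : (minpoly K α).natDegree = Module.finrank K E :=
      (Field.primitive_element_iff_minpoly_natDegree_eq K α).1 hα
    refine ⟨α, ?_⟩
    have h5 := (linearIndependent_pow (K := K) α).map' E.val.toLinearMap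
      (LinearMap.ker_eq_bot.2 E.val.injective)
    have h6 := h5.comp (Fin.castLE (h3.trans h4.ge)) (Fin.castLE_injective _)
    exact h6

theorem exists_sub_finrank (M : Submodule K L) (r : ℕ) (h : r ≤ Module.finrank K M) :
    ∃ A ≤ M, Module.finrank K A = r := by
  obtain ⟨f, hf⟩ := exists_linearIndependent_of_le_finrank h
  refine ⟨Submodule.span K (Set.range fun i => (f i : L)), ?_, ?_⟩
  · rw [Submodule.span_le]; rintro _ ⟨i, rfl⟩; exact (f i).2
  · have := hf.map' M.subtype M.ker_subtype
    have := finrank_span_eq_card this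
    rw [Fintype.card_fin] at this
    exact this

theorem ceil_le_rank (H : IntermediateField K L) [FiniteDimensional K H] (r : ℕ)
    (hr : (r : Cardinal) ≤ Module.rank K L) :
    ((r ⌈/⌉ Module.finrank K H : ℕ) : Cardinal) ≤ Module.rank H L := by
  by_contra hlt
  push Not at hlt
  obtain ⟨n, hn⟩ := Cardinal.lt_aleph0.1 (hlt.trans (Cardinal.natCast_lt_aleph0))
  rw [hn, Nat.cast_lt] at hlt
  have h := rank_mul_rank K H L
  rw [hn, ← Module.finrank_eq_rank K H] at h
  rw [← h] at hr
  have hr' : r ≤ Module.finrank K H * n := by exact_mod_cast hr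
  have : r ⌈/⌉ Module.finrank K H ≤ n := by
    rw [ceilDiv_le_iff_le_smul Module.finrank_pos]; exact hr'
  omega

theorem upper_bound [CharZero K] (r s : ℕ) (hr : 0 < r) (hs : 0 < s)
    (hrL : (r : Cardinal) ≤ Module.rank K L) (hsL : (s : Cardinal) ≤ Module.rank K L)
    (H : IntermediateField K L) [FiniteDimensional K H] :
    ∃ A B : Submodule K L, Module.finrank K A = r ∧ Module.finrank K B = s ∧
      Module.finrank K ↥(A * B) ≤
      (r ⌈/⌉ Module.finrank K H + s ⌈/⌉ Module.finrank K H - 1) * Module.finrank K H := by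
  have hpos : 0 < Module.finrank K H := Module.finrank_pos
  have har := le_smul_ceilDiv (b := r) hpos
  have hbs := le_smul_ceilDiv (b := s) hpos
  have h1 := ceil_le_rank H r hrL
  have h2 := ceil_le_rank H s hsL
  generalize r ⌈/⌉ Module.finrank K H = a at *
  generalize s ⌈/⌉ Module.finrank K H = b at *
  rw [smul_eq_mul] at har hbs
  have ha : 0 < a := by rcases Nat.eq_zero_or_pos a with rfl | h <;> [(simp at har; omega); exact h]
  have hb : 0 < b := by rcases Nat.eq_zero_or_pos b with rfl | h <;> [(simp at hbs; omega); exact h]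
  have hCZ : CharZero H := charZero_of_injective_algebraMap (algebraMap K H).injective
  obtain ⟨x, hx⟩ := exists_pow_li (K := H) (L := L) (max a b) (by
    rcases max_choice a b with h | h <;> rw [h] <;> assumption)
  let P : ℕ → Submodule H L := fun n => Submodule.span H (Set.range fun i : Fin n => x ^ (i : ℕ))
  have hfin : ∀ n, Module.finrank K ((P n).restrictScalars K) =
      Module.finrank K H * Module.finrank H (P n) := fun n =>
    (Module.finrank_mul_finrank K H (P n)).symm
  have hP : ∀ n ≤ max a b, Module.finrank H (P n) = n := by
    intro n hn
    have h6 := hx.comp (Fin.castLE hn) (Fin.castLE_injective _)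
    have := finrank_span_eq_card h6
    rw [Fintype.card_fin] at this
    exact this
  obtain ⟨A, hA, hAr⟩ := exists_sub_finrank ((P a).restrictScalars K) r (by
    rw [hfin, hP a (le_max_left _ _)]; exact har)
  obtain ⟨B, hB, hBs⟩ := exists_sub_finrank ((P b).restrictScalars K) s (by
    rw [hfin, hP b (le_max_right _ _)]; exact hbs)
  refine ⟨A, B, hAr, hBs, ?_⟩
  have hPP : P a * P b ≤ P (a + b - 1) := by
    rw [Submodule.span_mul_span, Submodule.span_le]
    rintro _ ⟨_, ⟨i, rfl⟩, _, ⟨j, rfl⟩, rfl⟩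
    apply Submodule.subset_span
    exact ⟨⟨i + j, by omega⟩, by simp [pow_add]⟩
  have hle : A * B ≤ (P (a + b - 1)).restrictScalars K := by
    rw [Submodule.mul_le]
    intro u hu v hv
    exact hPP (Submodule.mul_mem_mul (hA hu) (hB hv))
  have hHfd : FiniteDimensional H (P (a + b - 1)) := 
    FiniteDimensional.span_of_finite H (Set.finite_range _)
  have hKfd : FiniteDimensional K ((P (a + b - 1)).restrictScalars K) :=
    Module.Finite.trans (R := K) H (P (a + b - 1))
  calc _ ≤ _ := Submodule.finrank_mono hle
    _ = _ := hfin _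
    _ ≤ Module.finrank K H * (a + b - 1) := by
      apply Nat.mul_le_mul_left
      have := finrank_range_le_card (R := H) (fun i : Fin (a + b - 1) => x ^ (i : ℕ))
      rw [Fintype.card_fin] at this
      exact this
    _ = _ := mul_comm _ _

end helpers


/-- Theorem 1.1 in characteristic 0: for a field extension `K ⊆ L` with `char K = 0`
and positive integers `r, s ≤ dim_K L`, the minimum of `dim_K ⟨AB⟩` over `K`-subspaces
`A, B` of `L` with `dim_K A = r`, `dim_K B = s` equals
`κ_{K,L}(r,s) = min_h (⌈r/h⌉ + ⌈s/h⌉ - 1)·h`, where `h` ranges over the `K`-degrees of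
finite-dimensional intermediate fields `K ⊆ H ⊆ L`. -/
theorem stmt_18 (K L : Type*) [Field K] [Field L] [Algebra K L]
    [CharZero K]
    (r s : ℕ) (hr : 0 < r) (hs : 0 < s)
    (hrL : (r : Cardinal) ≤ Module.rank K L) (hsL : (s : Cardinal) ≤ Module.rank K L) :
    sInf {n : ℕ | ∃ A B : Submodule K L,
        Module.finrank K A = r ∧ Module.finrank K B = s ∧ Module.finrank K ↥(A * B) = n}
      = sInf {n : ℕ | ∃ H : IntermediateField K L, FiniteDimensional K H ∧
          n = (r ⌈/⌉ Module.finrank K ↥H + s ⌈/⌉ Module.finrank K ↥H - 1)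
                * Module.finrank K ↥H} := by
  apply le_antisymm
  · obtain ⟨H, hH, hn⟩ := Nat.sInf_mem (s := {n : ℕ | ∃ H : IntermediateField K L,
        FiniteDimensional K H ∧
          n = (r ⌈/⌉ Module.finrank K ↥H + s ⌈/⌉ Module.finrank K ↥H - 1)
                * Module.finrank K ↥H}) ⟨_, ⊥, inferInstance, rfl⟩
    rw [hn]
    obtain ⟨A, B, hA, hB, hAB⟩ := upper_bound r s hr hs hrL hsL H
    refine le_trans (Nat.sInf_le ?_) hAB
    exact ⟨A, B, hA, hB, rfl⟩
  · obtain ⟨A₀, B₀, hA₀, hB₀, _⟩ := upper_bound r s hr hs hrL hsL (⊥ : IntermediateField K L)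
    obtain ⟨A, B, hA, hB, hn⟩ := Nat.sInf_mem (s := {n : ℕ | ∃ A B : Submodule K L,
        Module.finrank K A = r ∧ Module.finrank K B = s ∧ Module.finrank K ↥(A * B) = n})
        ⟨_, A₀, B₀, hA₀, hB₀, rfl⟩
    rw [← hn]
    obtain ⟨H, hH, hle⟩ := lower_bound A B r s hr hs hA hB
    refine le_trans (Nat.sInf_le ?_) hle
    exact ⟨H, hH, rfl⟩
end
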